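/- arXiv:math/0012230 — 2 statements merged into one kernel-verified Lean document; each statement's English description precedes it below -/
import Mathlib

section
/- For walks on the slit plane with diagonal steps: for all i ≥ 1 and n ≥ i, the number of such walks of length 2n ending at (2i,0) equals (i/n) · binom(2i,i) · binom(2n, n−i) · 4^{n−i}. -/
open Filter

/-- The forbidden half-line `H = {(k,0) : k ≤ 0}`. -/
def slitH : Set (ℤ × ℤ) := {p : ℤ × ℤ | p.2 = 0 ∧ p.1 ≤ 0}

/-- The four steps of the ordinary square lattice. -/
def sqSteps : Set (ℤ × ℤ) := {(1,0), (-1,0), (0,1), (0,-1)}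

/-- The four diagonal steps. -/
def diagSteps : Set (ℤ × ℤ) := {(1,1), (1,-1), (-1,1), (-1,-1)}

/-- `w : Fin (n+1) → ℤ × ℤ` is a walk on the slit plane with steps in `A`. -/
def IsSlitWalk (A : Set (ℤ × ℤ)) (n : ℕ) (w : Fin (n+1) → ℤ × ℤ) : Prop :=
  w 0 = (0,0) ∧ (∀ m : Fin n, w m.succ - w m.castSucc ∈ A) ∧
    ∀ m : Fin (n+1), 1 ≤ (m : ℕ) → w m ∉ slitH

/-- `a_{i,j}(n)`: the number of walks on the slit plane of length `n` ending at `(i,j)`. -/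
noncomputable def slitCount (A : Set (ℤ × ℤ)) (i j : ℤ) (n : ℕ) : ℕ :=
  Nat.card {w : Fin (n+1) → ℤ × ℤ // IsSlitWalk A n w ∧ w (Fin.last n) = (i, j)}

/-!
Let `S` and `F` be the generating series of the walks ending on the horizontal axis, restricted to
the slit plane and unrestricted respectively, with `t` marking the length and `x` the abscissa of
the endpoint. Discarding walks as they enter the slit gives `S = F V`, where the coefficients of `V`
contain only nonpositive powers of `x`, whereas those of `S` contain only positive ones apart from
the constant term `1`. If `F = g h` with `g` of the same shape as `S` and `h` of the same shape as
`V`, then `S = g (h V)`, and comparing coefficients of the powers of `t` one after the other forces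
`h V = 1`, so `S = g`. This is a Wiener–Hopf argument.

For the diagonal steps, `F = 1 / √(1 - 4 (x + x⁻¹)² z)` with `z = t²`. Let `b = z C(4z)²`, where `C`
is the Catalan series, be the root of `b = z (1 + 4b)²`. Then
`(1 + 4b)² (1 - 4 (x + x⁻¹)² z) = (1 - 4 x² b) (1 - 4 x⁻² b)`, which splits `F` and yields
`S = 1 / √(1 - 4 x² b)`. The coefficient of `x²ⁱ` in `S` is thus `binom(2i,i) bⁱ`, and the powers of
the Catalan series have the ballot numbers as coefficients.
-/

namespace SlitPlane

open PowerSeries LaurentPolynomial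

section PowerSeries

theorem constantCoeff_subst_of_constantCoeff_eq_zero {R : Type*} [CommRing R] {a : R⟦X⟧}
    (ha : constantCoeff a = 0) (f : R⟦X⟧) : constantCoeff (f.subst a) = constantCoeff f := by
  refine (constantCoeff_subst (HasSubst.of_constantCoeff_zero' ha) f).trans ?_
  rw [finsum_eq_single _ 0 fun k hk => ?_]
  · simp
  · change _ • constantCoeff (a ^ k) = 0
    rw [map_pow, ha, zero_pow hk, smul_zero]

theorem eq_of_sq_mul_eq_one {R : Type*} [CommRing R] [IsDomain R] [NeZero (2 : R)] {f g d : R⟦X⟧}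
    (hf : f ^ 2 * d = 1) (hg : g ^ 2 * d = 1) (hf₀ : constantCoeff f = 1)
    (hg₀ : constantCoeff g = 1) : f = g := by
  have hsq : f ^ 2 = g ^ 2 := by linear_combination g ^ 2 * hf - f ^ 2 * hg
  refine (sq_eq_sq_iff_eq_or_eq_neg.mp hsq).resolve_right fun h => two_ne_zero (α := R) ?_
  have := congrArg constantCoeff h
  rw [map_neg, hf₀, hg₀] at this
  linear_combination this

theorem eq_one_of_coeff_mul_mem {A : Type*} [Ring A] {P N : AddSubgroup A} (hPN : Disjoint P N)
    {g q : A⟦X⟧} (hg₀ : constantCoeff g = 1) (hg : ∀ n, coeff (n + 1) g ∈ P)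
    (hq₀ : constantCoeff q = 1) (hq : ∀ n, coeff (n + 1) q ∈ N)
    (hgq : ∀ n, coeff (n + 1) (g * q) ∈ P) : q = 1 := by
  have coeff_succ (n : ℕ) : coeff (n + 1) q = 0 := by
    induction n using Nat.strong_induction_on with
    | _ n ih =>
      have coeff_mul_succ : coeff (n + 1) (g * q) = coeff (n + 1) q + coeff (n + 1) g := by
        rw [coeff_mul, Finset.Nat.sum_antidiagonal_succ, coeff_zero_eq_constantCoeff_apply, hg₀,
          one_mul, Finset.sum_eq_single_of_mem (n, 0) (by simp), coeff_zero_eq_constantCoeff_apply,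
          hq₀, mul_one]
        rintro ⟨j, k⟩ hjk hne
        rw [Finset.HasAntidiagonal.mem_antidiagonal] at hjk
        obtain ⟨k, rfl⟩ := Nat.exists_eq_succ_of_ne_zero (n := k) (by grind)
        rw [ih k (by grind), mul_zero]
      have mem_P : coeff (n + 1) q ∈ P :=
        eq_sub_of_add_eq coeff_mul_succ.symm ▸ sub_mem (hgq n) (hg n)
      exact AddSubgroup.disjoint_def.mp hPN mem_P (hq n)
  ext1 n
  cases n with
  | zero => simp [hq₀]
  | succ n => simp [coeff_succ, coeff_one]

theorem coeff_mul_mem_subring {A : Type*} [Ring A] (S : Subring A) {f g : A⟦X⟧}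
    (hf : ∀ n, coeff n f ∈ S) (hg : ∀ n, coeff n g ∈ S) (n : ℕ) : coeff n (f * g) ∈ S := by
  rw [coeff_mul]
  exact S.sum_mem fun _ _ => mul_mem (hf _) (hg _)

end PowerSeries

section CentralBinomial

/-- The generating function `∑ binom(2k,k) Xᵏ` of the central binomial coefficients. -/
noncomputable def centralBinomSeries (R : Type*) [Semiring R] : R⟦X⟧ :=
  PowerSeries.mk fun k => (k.centralBinom : R)

theorem centralBinomSeries_sq_mul {R : Type*} [CommRing R] :
    centralBinomSeries R ^ 2 * (1 - 4 * X) = 1 := by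
  set D : R⟦X⟧ := X * catalanSeries.map (Nat.castRingHom R) with hD
  have D_eq : D = X + D ^ 2 := by
    have := congrArg (PowerSeries.map (Nat.castRingHom R)) catalanSeries_sq_mul_X_add_one
    simp only [map_add, map_mul, map_pow, map_one, map_X] at this
    linear_combination -X * this
  have deriv_D : d⁄dX R D = centralBinomSeries R := by
    ext n
    rw [coeff_derivative, hD, coeff_succ_X_mul, centralBinomSeries, coeff_mk, coeff_map,
      catalanSeries_coeff, ← succ_mul_catalan_eq_centralBinom]
    push_cast
    simp [mul_comm]
  have deriv_eq : centralBinomSeries R * (1 - 2 * D) = 1 := by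
    have := congrArg (d⁄dX R) D_eq
    simp only [map_add, derivative_X, derivative_pow, deriv_D] at this
    push_cast at this
    linear_combination this
  linear_combination 4 * centralBinomSeries R ^ 2 * D_eq +
    (centralBinomSeries R * (1 - 2 * D) + 1) * deriv_eq

theorem centralBinomSeries_subst_sq_mul {R : Type*} [CommRing R] {a : R⟦X⟧}
    (ha : constantCoeff a = 0) : (centralBinomSeries R).subst a ^ 2 * (1 - 4 * a) = 1 := by
  have h := congrArg (substAlgHom (R := R) (HasSubst.of_constantCoeff_zero' ha))
    centralBinomSeries_sq_mul
  simp only [map_mul, map_pow, map_sub, map_one, map_ofNat, substAlgHom_X] at h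
  rwa [coe_substAlgHom] at h

end CentralBinomial

section KernelRoot

theorem coeff_catalanSeries_pow (m k : ℕ) :
    (2 * m + k) * coeff m (catalanSeries ^ k) = k * (2 * m + k).choose m := by
  induction m generalizing k with
  | zero => simp
  | succ m ihm =>
    induction k with
    | zero => simp [coeff_one]
    | succ k ihk =>
      have recurrence : coeff (m + 1) (catalanSeries ^ (k + 1)) =
          coeff (m + 1) (catalanSeries ^ k) + coeff m (catalanSeries ^ (k + 2)) := by
        rw [← coeff_succ_mul_X m, ← map_add, pow_succ]
        nth_rw 2 [← catalanSeries_sq_mul_X_add_one]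
        ring_nf
      have ballot₁ : (2 * m + k + 2) * coeff (m + 1) (catalanSeries ^ k) =
          k * (2 * m + k + 2).choose (m + 1) := by
        convert ihk using 2 <;> grind
      have ballot₂ : (2 * m + k + 2) * coeff m (catalanSeries ^ (k + 2)) =
          (k + 2) * (2 * m + k + 2).choose m := ihm (k + 2)
      have absorb : (2 * m + k + 2).choose (m + 1) * (m + 1) =
          (2 * m + k + 2).choose m * (m + k + 2) := by
        rw [Nat.choose_succ_right_eq]
        congr 1
        lia
      have pascal : (2 * (m + 1) + (k + 1)).choose (m + 1) =
          (2 * m + k + 2).choose m + (2 * m + k + 2).choose (m + 1) := by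
        rw [← Nat.choose_succ_succ']
        congr 1
        ring
      rw [recurrence, pascal]
      refine Nat.eq_of_mul_eq_mul_left (Nat.succ_pos (2 * m + k + 1)) ?_
      zify at ballot₁ ballot₂ absorb ⊢
      linear_combination (2 * m + k + 3 : ℤ) * (ballot₁ + ballot₂) - 2 * absorb

/-- The power series root `b` of the kernel equation `b = X (1 + 4 b)²`. -/
noncomputable def kernelRoot : ℕ⟦X⟧ := X * rescale 4 catalanSeries ^ 2

theorem kernelRoot_eq : kernelRoot = X * (1 + 4 * kernelRoot) ^ 2 := by
  have rescale_X : rescale 4 (X : ℕ⟦X⟧) = 4 * X := by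
    ext n
    rw [coeff_rescale, ← map_ofNat (PowerSeries.C (R := ℕ)) 4, coeff_C_mul, coeff_X]
    split_ifs with h <;> simp [h]
  have h := congrArg (rescale 4) catalanSeries_sq_mul_X_add_one
  simp only [map_add, map_mul, map_pow, map_one, rescale_X] at h
  have rescale_catalan : rescale 4 catalanSeries = 1 + 4 * kernelRoot :=
    h.symm.trans (by rw [kernelRoot]; ring)
  rw [← rescale_catalan, kernelRoot]

theorem coeff_kernelRoot_pow (m i : ℕ) :
    coeff (m + i) (kernelRoot ^ i) = 4 ^ m * coeff m (catalanSeries ^ (2 * i)) := by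
  rw [kernelRoot, mul_pow, coeff_X_pow_mul, ← pow_mul, ← map_pow, coeff_rescale]

theorem constantCoeff_kernelRoot : constantCoeff kernelRoot = 0 := by
  simp [kernelRoot]

theorem mul_coeff_kernelRoot_pow {i n : ℕ} (hn : i ≤ n) :
    n * coeff n (kernelRoot ^ i) = i * (2 * n).choose (n - i) * 4 ^ (n - i) := by
  obtain ⟨m, rfl⟩ := Nat.exists_eq_add_of_le' hn
  have ballot := coeff_catalanSeries_pow m (2 * i)
  rw [← mul_add] at ballot
  rw [coeff_kernelRoot_pow, Nat.add_sub_cancel]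
  linarith [congrArg (4 ^ m * ·) ballot]

end KernelRoot

section LaurentPolynomial

variable {R : Type*} [CommRing R]

theorem coeff_T_mul (k a : ℤ) (f : R[T;T⁻¹]) : (T k * f).coeff a = f.coeff (a - k) := by
  rw [T, AddMonoidAlgebra.coeff_single_mul_apply, one_mul, neg_add_eq_sub]

open scoped Pointwise in
theorem mul_mem_supported {s t : Set ℤ} {f g : R[T;T⁻¹]}
    (hf : f ∈ AddMonoidAlgebra.supported R R s) (hg : g ∈ AddMonoidAlgebra.supported R R t) :
    f * g ∈ AddMonoidAlgebra.supported R R (s + t) := by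
  classical
  rw [AddMonoidAlgebra.mem_supported] at *
  refine (Finset.coe_subset.mpr (AddMonoidAlgebra.support_coeff_mul_subset f g)).trans ?_
  rw [Finset.coe_add]
  exact Set.add_subset_add hf hg

theorem T_mem_supported {s : Set ℤ} {a : ℤ} (ha : a ∈ s) :
    (T a : R[T;T⁻¹]) ∈ AddMonoidAlgebra.supported R R s := by
  rw [AddMonoidAlgebra.mem_supported']
  intro b hb
  rw [T_apply, if_neg (ne_of_mem_of_not_mem ha hb)]

variable (R) in
/-- The submodule `T R[T]` of Laurent polynomials with positive exponents only. -/
noncomputable def posSubmodule : Submodule R R[T;T⁻¹] :=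
  AddMonoidAlgebra.supported R R (Set.Ioi 0)

variable (R) in
/-- The subalgebra `R[T⁻¹]` of Laurent polynomials with nonpositive exponents only. -/
noncomputable def nonposSubalgebra : Subalgebra R R[T;T⁻¹] :=
  (AddMonoidAlgebra.supported R R (Set.Iic 0)).toSubalgebra
    (T_zero (R := R) ▸ T_mem_supported Set.self_mem_Iic) fun _ _ hf hg =>
      AddMonoidAlgebra.supported_mono (Set.Iic_add_Iic_subset 0 0) (mul_mem_supported hf hg)

theorem T_mem_posSubmodule {a : ℤ} (ha : 0 < a) : T a ∈ posSubmodule R :=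
  T_mem_supported ha

theorem T_mem_nonposSubalgebra {a : ℤ} (ha : a ≤ 0) : T a ∈ nonposSubalgebra R :=
  T_mem_supported (s := Set.Iic 0) ha

theorem mem_posSubmodule {f : R[T;T⁻¹]} : f ∈ posSubmodule R ↔ ∀ a ≤ 0, f.coeff a = 0 := by
  simp [posSubmodule, AddMonoidAlgebra.mem_supported']

theorem mem_nonposSubalgebra {f : R[T;T⁻¹]} :
    f ∈ nonposSubalgebra R ↔ ∀ a > 0, f.coeff a = 0 := by
  simp [nonposSubalgebra, AddMonoidAlgebra.mem_supported']

theorem disjoint_posSubmodule_nonposSubalgebra : Disjoint (posSubmodule R).toAddSubgroup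
    (nonposSubalgebra R).toSubmodule.toAddSubgroup :=
  AddSubgroup.disjoint_def.mpr fun hpos hnonpos => LaurentPolynomial.ext fun a =>
    (le_or_gt a 0).elim (mem_posSubmodule.mp hpos a) (mem_nonposSubalgebra.mp hnonpos a)

/-- The part of a Laurent polynomial consisting of its terms with nonpositive exponent. -/
noncomputable def nonposPart (f : R[T;T⁻¹]) : R[T;T⁻¹] :=
  .ofCoeff (f.coeff.filter (· ≤ 0))

theorem coeff_nonposPart (f : R[T;T⁻¹]) (a : ℤ) :
    (nonposPart f).coeff a = if a ≤ 0 then f.coeff a else 0 := by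
  simp [nonposPart, Finsupp.filter_apply]

theorem nonposPart_mem_nonposSubalgebra (f : R[T;T⁻¹]) : nonposPart f ∈ nonposSubalgebra R :=
  mem_nonposSubalgebra.mpr fun a ha => by rw [coeff_nonposPart, if_neg ha.not_ge]

theorem sub_nonposPart_mem_posSubmodule (f : R[T;T⁻¹]) : f - nonposPart f ∈ posSubmodule R :=
  mem_posSubmodule.mpr fun a ha => by
    rw [AddMonoidAlgebra.coeff_sub, Finsupp.sub_apply, coeff_nonposPart, if_pos ha, sub_self]

theorem constantCoeff_C_T_mul_map {g : ℕ⟦X⟧} (hg : constantCoeff g = 0) (e : ℤ) :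
    constantCoeff (PowerSeries.C (T e : R[T;T⁻¹]) * g.map (Nat.castRingHom R[T;T⁻¹])) = 0 := by
  rw [map_mul, ← coeff_zero_eq_constantCoeff_apply (g.map _), coeff_map,
    coeff_zero_eq_constantCoeff_apply, hg, map_zero, mul_zero]

theorem coeff_subst_C_T_mul_map (f : R[T;T⁻¹]⟦X⟧) {g : ℕ⟦X⟧} (hg : constantCoeff g = 0) (e : ℤ)
    (n : ℕ) :
    coeff n (f.subst (PowerSeries.C (T e : R[T;T⁻¹]) * g.map (Nat.castRingHom R[T;T⁻¹]))) =
      ∑ k ∈ Finset.range (n + 1), coeff n (g ^ k) • (coeff k f * T (k * e)) := by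
  rw [coeff_subst' (HasSubst.of_constantCoeff_zero' (constantCoeff_C_T_mul_map hg e)),
    finsum_eq_sum_of_support_subset (s := Finset.range (n + 1))]
  · refine Finset.sum_congr rfl fun k _ => ?_
    rw [mul_pow, ← map_pow, ← map_pow, coeff_C_mul, T_pow, coeff_map, Nat.coe_castRingHom,
      smul_eq_mul, nsmul_eq_mul]
    ring
  · refine Function.support_subset_iff'.mpr fun k hk => ?_
    have vanish : coeff n (g ^ k) = 0 :=
      X_pow_dvd_iff.mp (pow_dvd_pow_of_dvd (X_dvd_iff.mpr hg) k) n (by simpa using hk)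
    rw [mul_pow, ← map_pow, ← map_pow, coeff_C_mul, coeff_map, vanish, map_zero, mul_zero,
      smul_zero]

theorem T_add_T_pow (n : ℕ) :
    (T 1 + T (-1) : R[T;T⁻¹]) ^ n =
      ∑ k ∈ Finset.range (n + 1), n.choose k • T (2 * k - n) := by
  rw [add_pow]
  refine Finset.sum_congr rfl fun k hk => ?_
  rw [T_pow, T_pow, ← T_add, nsmul_eq_mul, mul_comm]
  congr 2
  grind

theorem coeff_zero_T_add_T_pow (n : ℕ) :
    ((T 1 + T (-1) : R[T;T⁻¹]) ^ n).coeff 0 =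
      ∑ k ∈ Finset.range (n + 1), if 2 * k = n then (n.choose k : R) else 0 := by
  rw [T_add_T_pow, AddMonoidAlgebra.coeff_sum, Finsupp.finsetSum_apply]
  refine Finset.sum_congr rfl fun k _ => ?_
  rw [AddMonoidAlgebra.coeff_smul, Finsupp.smul_apply, T_apply]
  split_ifs with h₁ h₂ h₂
  · simp
  · lia
  · lia
  · simp

theorem coeff_zero_T_add_T_pow_two_mul (n : ℕ) :
    ((T 1 + T (-1) : R[T;T⁻¹]) ^ (2 * n)).coeff 0 = n.centralBinom := by
  rw [coeff_zero_T_add_T_pow,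
    Finset.sum_eq_single_of_mem n (by grind) fun k _ hk => if_neg (by lia),
    if_pos rfl, Nat.centralBinom_eq_two_mul_choose]

theorem coeff_zero_T_add_T_pow_of_odd {n : ℕ} (hn : Odd n) :
    ((T 1 + T (-1) : R[T;T⁻¹]) ^ n).coeff 0 = 0 := by
  rw [coeff_zero_T_add_T_pow]
  exact Finset.sum_eq_zero fun k _ => if_neg (by grind)

end LaurentPolynomial

section Walks

/-- The walks on the slit plane of length `n` with steps in `A` that end at `p`. -/
abbrev SlitWalk (A : Set (ℤ × ℤ)) (n : ℕ) (p : ℤ × ℤ) : Type :=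
  {w : Fin (n + 1) → ℤ × ℤ // IsSlitWalk A n w ∧ w (Fin.last n) = p}

variable {A : Set (ℤ × ℤ)} {n : ℕ}

theorem isSlitWalk_zero {w : Fin 1 → ℤ × ℤ} : IsSlitWalk A 0 w ↔ w = fun _ => 0 := by
  simp [IsSlitWalk, funext_iff, Fin.forall_fin_one, Prod.zero_eq_mk]

theorem isSlitWalk_snoc {w : Fin (n + 1) → ℤ × ℤ} {p : ℤ × ℤ} :
    IsSlitWalk A (n + 1) (Fin.snoc (α := fun _ => ℤ × ℤ) w p) ↔
      IsSlitWalk A n w ∧ p - w (Fin.last n) ∈ A ∧ p ∉ slitH := by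
  simp only [IsSlitWalk, Fin.forall_fin_succ' (n := n), Fin.forall_fin_succ' (n := n + 1),
    ← Fin.castSucc_zero (n := n + 1), Fin.snoc_castSucc, Fin.succ_castSucc, Fin.succ_last,
    Fin.snoc_last, Fin.val_castSucc, Fin.val_last]
  grind

/-- A walk of length `n + 1` is determined by its last step and the walk preceding that step. -/
def slitWalkSuccEquiv (A : Set (ℤ × ℤ)) (n : ℕ) {p : ℤ × ℤ} (hp : p ∉ slitH) :
    SlitWalk A (n + 1) p ≃ Σ d : A, SlitWalk A n (p - d) where
  toFun w :=
    have hw : IsSlitWalk A n (Fin.init w.1) ∧ p - Fin.init w.1 (Fin.last n) ∈ A ∧ p ∉ slitH := by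
      obtain ⟨w, hw, rfl⟩ := w
      rwa [← isSlitWalk_snoc, Fin.snoc_init_self]
    ⟨⟨_, hw.2.1⟩, Fin.init w.1, hw.1, (sub_sub_cancel _ _).symm⟩
  invFun x := ⟨Fin.snoc (α := fun _ => ℤ × ℤ) x.2.1 p,
    isSlitWalk_snoc.mpr ⟨x.2.2.1, by simp [x.2.2.2], hp⟩, Fin.snoc_last ..⟩
  left_inv w := Subtype.ext <| by simp only [← w.2.2, Fin.snoc_init_self]
  right_inv x := Sigma.subtype_ext (Subtype.ext <| by simp [x.2.2.2]) (by simp)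

theorem isEmpty_slitWalk_succ {p : ℤ × ℤ} (hp : p ∈ slitH) : IsEmpty (SlitWalk A (n + 1) p) :=
  ⟨fun ⟨_, ⟨_, _, notMem_slitH⟩, last_eq⟩ => notMem_slitH _ (by simp) (last_eq.symm ▸ hp)⟩

theorem finite_slitWalk [Finite A] (n : ℕ) (p : ℤ × ℤ) : Finite (SlitWalk A n p) := by
  induction n generalizing p with
  | zero => exact .of_injective (fun _ => ()) fun v w _ =>
      Subtype.ext <| (isSlitWalk_zero.mp v.2.1).trans (isSlitWalk_zero.mp w.2.1).symm
  | succ n ih =>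
    by_cases hp : p ∈ slitH
    · have := isEmpty_slitWalk_succ (A := A) (n := n) hp
      infer_instance
    · exact .of_equiv _ (slitWalkSuccEquiv A n hp).symm

theorem slitCount_zero (a b : ℤ) : slitCount A a b 0 = if a = 0 ∧ b = 0 then 1 else 0 := by
  simp only [slitCount, isSlitWalk_zero]
  split_ifs with h
  · obtain ⟨rfl, rfl⟩ := h
    exact Nat.card_eq_one_iff_unique.mpr
      ⟨⟨fun v w => Subtype.ext (v.2.1.trans w.2.1.symm)⟩, ⟨_, rfl, rfl⟩⟩
  · refine @Nat.card_of_isEmpty _ ⟨fun ⟨w, hw, last_eq⟩ => h ?_⟩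
    simpa [hw, Prod.ext_iff, eq_comm] using last_eq

theorem slitCount_succ_of_mem_slitH {a b : ℤ} (h : (a, b) ∈ slitH) :
    slitCount A a b (n + 1) = 0 :=
  have := isEmpty_slitWalk_succ (A := A) (n := n) h
  Nat.card_of_isEmpty

theorem slitCount_succ {A : Finset (ℤ × ℤ)} {a b : ℤ} (h : (a, b) ∉ slitH) :
    slitCount A a b (n + 1) = ∑ d ∈ A, slitCount A (a - d.1) (b - d.2) n := by
  have := finite_slitWalk (A := A) n
  exact (Nat.card_congr (slitWalkSuccEquiv A n h)).trans <| Nat.card_sigma.trans <|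
    Finset.sum_coe_sort A fun d => slitCount A (a - d.1) (b - d.2) n

end Walks

section WienerHopf

variable (A : Finset (ℤ × ℤ))

/-- The step polynomial `∑ xⁱ yʲ` over the steps `(i, j)` of `A`; the inner variable is `x`, the
outer one is `y`. -/
noncomputable def stepPoly : ℤ[T;T⁻¹][T;T⁻¹] :=
  ∑ d ∈ A, LaurentPolynomial.C (T d.1) * T d.2

theorem coeff_stepPoly_mul (f : ℤ[T;T⁻¹][T;T⁻¹]) (a b : ℤ) :
    ((stepPoly A * f).coeff b).coeff a = ∑ d ∈ A, (f.coeff (b - d.2)).coeff (a - d.1) := by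
  simp only [stepPoly, Finset.sum_mul, AddMonoidAlgebra.coeff_sum, Finsupp.finsetSum_apply,
    ← LaurentPolynomial.smul_eq_C_mul, smul_mul_assoc, AddMonoidAlgebra.coeff_smul,
    Finsupp.smul_apply, smul_eq_mul, coeff_T_mul]

/-- The generating polynomial of the walks on the slit plane of length `n` by their endpoint:
at each step, the walks that have just entered the slit are discarded. -/
noncomputable def slitPoly : ℕ → ℤ[T;T⁻¹][T;T⁻¹]
  | 0 => 1
  | n + 1 => stepPoly A * slitPoly n -
      LaurentPolynomial.C (nonposPart ((stepPoly A * slitPoly n).coeff 0))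

/-- The negative of the generating polynomial of the walks that enter the slit for the first time
at step `n`, with an added `1` for `n = 0`. -/
noncomputable def absorption : ℕ → ℤ[T;T⁻¹]
  | 0 => 1
  | n + 1 => -nonposPart ((stepPoly A * slitPoly A n).coeff 0)

theorem coeff_slitPoly (n : ℕ) (a b : ℤ) :
    ((slitPoly A n).coeff b).coeff a = slitCount A a b n := by
  induction n generalizing a b with
  | zero =>
    rw [slitCount_zero, slitPoly, ← T_zero, T_apply]
    by_cases hb : b = 0
    · simp [hb, ← T_zero, T_apply, eq_comm]
    · simp [hb, Ne.symm hb]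
  | succ n ih =>
    rw [slitPoly, AddMonoidAlgebra.coeff_sub, Finsupp.sub_apply, AddMonoidAlgebra.coeff_sub,
      Finsupp.sub_apply, coeff_stepPoly_mul, LaurentPolynomial.C_apply]
    simp only [ih]
    by_cases h : (a, b) ∈ slitH
    · rw [slitCount_succ_of_mem_slitH h]
      obtain ⟨rfl, ha⟩ : b = 0 ∧ a ≤ 0 := h
      simp [coeff_nonposPart, ha, coeff_stepPoly_mul, ih]
    · rw [slitCount_succ h]
      by_cases hb : b = 0
      · have ha : ¬ a ≤ 0 := fun ha => h ⟨hb, ha⟩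
        simp [hb, coeff_nonposPart, ha]
      · simp [hb]

theorem slitPoly_eq_sum (n : ℕ) : slitPoly A n = ∑ p ∈ Finset.HasAntidiagonal.antidiagonal n,
    stepPoly A ^ p.1 * LaurentPolynomial.C (absorption A p.2) := by
  induction n with
  | zero => simp [slitPoly, absorption]
  | succ n ih =>
    simp_rw [Finset.Nat.sum_antidiagonal_succ, pow_succ', mul_assoc, ← Finset.mul_sum, ← ih]
    simp only [slitPoly, absorption, pow_zero, one_mul, map_neg]
    ring

/-- The generating series, by length and by abscissa of the endpoint, of the walks with steps in
`A` that end on the horizontal axis. -/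
noncomputable def freeAxisSeries : ℤ[T;T⁻¹]⟦X⟧ :=
  PowerSeries.mk fun n => (stepPoly A ^ n).coeff 0

/-- The generating series, by length and by abscissa of the endpoint, of the walks on the slit plane
with steps in `A` that end on the horizontal axis. -/
noncomputable def slitAxisSeries : ℤ[T;T⁻¹]⟦X⟧ :=
  PowerSeries.mk fun n => (slitPoly A n).coeff 0

theorem slitAxisSeries_eq_mul :
    slitAxisSeries A = freeAxisSeries A * PowerSeries.mk (absorption A) := by
  ext1 n
  simp only [slitAxisSeries, freeAxisSeries, coeff_mul, coeff_mk, slitPoly_eq_sum, mul_comm (_ ^ _),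
    ← LaurentPolynomial.smul_eq_C_mul, AddMonoidAlgebra.coeff_sum, Finsupp.finsetSum_apply,
    AddMonoidAlgebra.coeff_smul, Finsupp.smul_apply, smul_eq_mul, mul_comm (absorption A _)]

theorem absorption_mem_nonposSubalgebra (n : ℕ) : absorption A n ∈ nonposSubalgebra ℤ := by
  cases n with
  | zero => exact one_mem _
  | succ n => exact neg_mem (nonposPart_mem_nonposSubalgebra _)

theorem coeff_succ_slitAxisSeries_mem_posSubmodule (n : ℕ) :
    coeff (n + 1) (slitAxisSeries A) ∈ posSubmodule ℤ := by
  convert sub_nonposPart_mem_posSubmodule ((stepPoly A * slitPoly A n).coeff 0) using 1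
  simp [slitAxisSeries, slitPoly]

theorem slitAxisSeries_eq_of_factorization {g h : ℤ[T;T⁻¹]⟦X⟧} (hgh : freeAxisSeries A = g * h)
    (hg₀ : constantCoeff g = 1) (hg : ∀ n, coeff (n + 1) g ∈ posSubmodule ℤ)
    (hh₀ : constantCoeff h = 1) (hh : ∀ n, coeff n h ∈ nonposSubalgebra ℤ) :
    slitAxisSeries A = g := by
  have factor : slitAxisSeries A = g * (h * PowerSeries.mk (absorption A)) := by
    rw [slitAxisSeries_eq_mul, hgh, mul_assoc]
  have quotient_eq_one : h * PowerSeries.mk (absorption A) = 1 := by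
    refine eq_one_of_coeff_mul_mem disjoint_posSubmodule_nonposSubalgebra hg₀ hg ?_
      (fun n => ?_) fun n => ?_
    · simp [hh₀, absorption]
    · refine coeff_mul_mem_subring (nonposSubalgebra ℤ).toSubring hh (fun n => ?_) _
      simpa using absorption_mem_nonposSubalgebra A n
    · exact factor ▸ coeff_succ_slitAxisSeries_mem_posSubmodule A n
  rw [factor, quotient_eq_one, mul_one]

end WienerHopf

section DiagonalSteps

/-- The series `1 / √(1 - 4 xᵉ b)`, where `b` is the root of the kernel equation. -/
noncomputable def kernelFactor (e : ℤ) : ℤ[T;T⁻¹]⟦X⟧ :=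
  (centralBinomSeries ℤ[T;T⁻¹]).subst
    (PowerSeries.C (T e : ℤ[T;T⁻¹]) * kernelRoot.map (Nat.castRingHom ℤ[T;T⁻¹]))

theorem kernelFactor_sq_mul (e : ℤ) : kernelFactor e ^ 2 *
    (1 - 4 * (PowerSeries.C (T e) * kernelRoot.map (Nat.castRingHom ℤ[T;T⁻¹]))) = 1 :=
  centralBinomSeries_subst_sq_mul (constantCoeff_C_T_mul_map constantCoeff_kernelRoot e)

theorem coeff_kernelFactor (e : ℤ) (n : ℕ) :
    coeff n (kernelFactor e) = ∑ k ∈ Finset.range (n + 1),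
      (k.centralBinom * coeff n (kernelRoot ^ k)) • (T (k * e) : ℤ[T;T⁻¹]) := by
  rw [kernelFactor, coeff_subst_C_T_mul_map _ constantCoeff_kernelRoot]
  refine Finset.sum_congr rfl fun k _ => ?_
  rw [centralBinomSeries, coeff_mk, ← nsmul_eq_mul, smul_smul, mul_comm]

theorem constantCoeff_kernelFactor (e : ℤ) : constantCoeff (kernelFactor e) = 1 := by
  rw [← coeff_zero_eq_constantCoeff_apply, coeff_kernelFactor]
  simp

theorem coeff_succ_kernelFactor_mem_posSubmodule {e : ℤ} (he : 0 < e) (n : ℕ) :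
    coeff (n + 1) (kernelFactor e) ∈ posSubmodule ℤ := by
  rw [coeff_kernelFactor]
  refine sum_mem fun k _ => ?_
  obtain rfl | hk := k.eq_zero_or_pos
  · simp [coeff_one]
  · exact nsmul_mem (T_mem_posSubmodule (by positivity)) _

theorem coeff_kernelFactor_mem_nonposSubalgebra {e : ℤ} (he : e ≤ 0) (n : ℕ) :
    coeff n (kernelFactor e) ∈ nonposSubalgebra ℤ := by
  rw [coeff_kernelFactor]
  exact sum_mem fun k _ => nsmul_mem
    (T_mem_nonposSubalgebra (mul_nonpos_of_nonneg_of_nonpos k.cast_nonneg he)) _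

theorem coeff_coeff_kernelFactor {e : ℤ} (he : e ≠ 0) {i n : ℕ} (hn : i ≤ n) :
    (coeff n (kernelFactor e)).coeff (i * e) = (i.centralBinom * coeff n (kernelRoot ^ i) : ℕ) := by
  rw [coeff_kernelFactor, AddMonoidAlgebra.coeff_sum, Finsupp.finsetSum_apply,
    Finset.sum_eq_single_of_mem i (by grind) fun k _ hk => ?_]
  · rw [AddMonoidAlgebra.coeff_smul, Finsupp.smul_apply, T_apply, if_pos rfl, nsmul_one]
  · rw [AddMonoidAlgebra.coeff_smul, Finsupp.smul_apply, T_apply, if_neg (by simp [he, hk]),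
      smul_zero]

/-- The series `(1 + 4 b) / √(1 - 4 x⁻² b)`, where `b` is the root of the kernel equation. -/
noncomputable def kernelCofactor : ℤ[T;T⁻¹]⟦X⟧ :=
  (1 + 4 * kernelRoot).map (Nat.castRingHom ℤ[T;T⁻¹]) * kernelFactor (-2)

theorem constantCoeff_kernelCofactor : constantCoeff kernelCofactor = 1 := by
  rw [kernelCofactor, map_mul, constantCoeff_kernelFactor, mul_one,
    ← coeff_zero_eq_constantCoeff_apply, coeff_map, coeff_zero_eq_constantCoeff_apply]
  simp [constantCoeff_kernelRoot]

theorem coeff_kernelCofactor_mem_nonposSubalgebra (n : ℕ) :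
    coeff n kernelCofactor ∈ nonposSubalgebra ℤ :=
  coeff_mul_mem_subring (nonposSubalgebra ℤ).toSubring
    (fun n => by rw [coeff_map]; exact natCast_mem _ _)
    (coeff_kernelFactor_mem_nonposSubalgebra (by decide)) n

theorem kernel_factorization {R : Type*} [CommRing R] {b x y z : R}
    (hb : b = z * (1 + 4 * b) ^ 2) (hxy : x * y = 1) :
    (1 + 4 * b) ^ 2 * (1 - 4 * ((x + 2 + y) * z)) = (1 - 4 * (x * b)) * (1 - 4 * (y * b)) := by
  linear_combination 4 * (x + 2 + y) * hb - 16 * b ^ 2 * hxy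

theorem C_T_add_T_sq : PowerSeries.C ((T 1 + T (-1)) ^ 2 : ℤ[T;T⁻¹]) =
    PowerSeries.C (T 2) + 2 + PowerSeries.C (T (-2)) := by
  have T_one_sq : (T 1 ^ 2 : ℤ[T;T⁻¹]) = T 2 := T_pow 1 2
  have T_neg_one_sq : (T (-1) ^ 2 : ℤ[T;T⁻¹]) = T (-2) := T_pow (-1) 2
  have T_mul_T_neg : (T 1 * T (-1) : ℤ[T;T⁻¹]) = 1 := by rw [← T_add]; rfl
  rw [← map_ofNat PowerSeries.C 2, ← map_add, ← map_add]
  congr 1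
  linear_combination T_one_sq + T_neg_one_sq + 2 * T_mul_T_neg

theorem rescale_centralBinomSeries_eq_mul :
    rescale ((T 1 + T (-1)) ^ 2) (centralBinomSeries ℤ[T;T⁻¹]) =
      kernelFactor 2 * kernelCofactor := by
  have root_eq := congrArg (PowerSeries.map (Nat.castRingHom ℤ[T;T⁻¹])) kernelRoot_eq
  have T_mul_T_neg : PowerSeries.C (T 2 : ℤ[T;T⁻¹]) * PowerSeries.C (T (-2)) = 1 := by
    rw [← map_mul, ← T_add]; rfl
  simp only [map_mul, map_pow, map_add, map_one, map_ofNat, map_X] at root_eq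
  have hX : constantCoeff (PowerSeries.C ((T 1 + T (-1)) ^ 2 : ℤ[T;T⁻¹]) * X) = 0 := by simp
  have := charZero_of_injective_ringHom (Polynomial.toLaurent_injective (R := ℤ))
  rw [rescale_eq_subst, PowerSeries.smul_eq_C_mul]
  refine eq_of_sq_mul_eq_one (centralBinomSeries_subst_sq_mul hX) ?_ ?_ ?_
  · have kernel := kernel_factorization root_eq T_mul_T_neg
    rw [C_T_add_T_sq, kernelCofactor]
    simp only [map_add, map_mul, map_one, map_ofNat]
    linear_combination kernelFactor 2 ^ 2 * kernelFactor (-2) ^ 2 * kernel +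
      kernelFactor (-2) ^ 2 * (1 - 4 * (PowerSeries.C (T (-2)) * kernelRoot.map _)) *
        kernelFactor_sq_mul 2 + kernelFactor_sq_mul (-2)
  · rw [constantCoeff_subst_of_constantCoeff_eq_zero hX, centralBinomSeries]
    simp
  · rw [map_mul, constantCoeff_kernelFactor, constantCoeff_kernelCofactor, mul_one]

/-- `diagSteps` as a `Finset`. -/
def diagStepFinset : Finset (ℤ × ℤ) := {(1, 1), (1, -1), (-1, 1), (-1, -1)}

theorem coe_diagStepFinset : (diagStepFinset : Set (ℤ × ℤ)) = diagSteps := by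
  simp [diagStepFinset, diagSteps]

theorem stepPoly_diagStepFinset :
    stepPoly diagStepFinset = LaurentPolynomial.C (T 1 + T (-1)) * (T 1 + T (-1)) := by
  rw [stepPoly, diagStepFinset, Finset.sum_insert (by decide), Finset.sum_insert (by decide),
    Finset.sum_insert (by decide), Finset.sum_singleton, map_add]
  ring

theorem freeAxisSeries_diagStepFinset : freeAxisSeries diagStepFinset =
    expand 2 two_ne_zero (rescale ((T 1 + T (-1)) ^ 2) (centralBinomSeries ℤ[T;T⁻¹])) := by
  ext1 n
  rw [freeAxisSeries, coeff_mk, stepPoly_diagStepFinset, mul_pow, ← map_pow,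
    ← LaurentPolynomial.smul_eq_C_mul, AddMonoidAlgebra.coeff_smul, Finsupp.smul_apply,
    smul_eq_mul]
  obtain even | odd := n.even_or_odd
  · obtain ⟨m, rfl⟩ := even.two_dvd
    rw [coeff_zero_T_add_T_pow_two_mul, coeff_expand_mul, coeff_rescale, centralBinomSeries,
      coeff_mk, pow_mul]
  · rw [coeff_zero_T_add_T_pow_of_odd odd, mul_zero,
      coeff_expand_of_not_dvd _ _ _ odd.not_two_dvd_nat]

theorem slitAxisSeries_diagStepFinset :
    slitAxisSeries diagStepFinset = expand 2 two_ne_zero (kernelFactor 2) := by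
  refine slitAxisSeries_eq_of_factorization _
    (freeAxisSeries_diagStepFinset.trans <|
      (congrArg _ rescale_centralBinomSeries_eq_mul).trans (map_mul _ _ _))
    ?_ (fun n => ?_) ?_ fun n => ?_
  · rw [constantCoeff_expand, constantCoeff_kernelFactor]
  · rw [coeff_expand]
    split_ifs with h
    · obtain ⟨m, hm⟩ := Nat.exists_eq_add_one_of_ne_zero (n := (n + 1) / 2) (by lia)
      exact hm ▸ coeff_succ_kernelFactor_mem_posSubmodule two_pos m
    · exact zero_mem _
  · rw [constantCoeff_expand, constantCoeff_kernelCofactor]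
  · rw [coeff_expand]
    split_ifs
    · exact coeff_kernelCofactor_mem_nonposSubalgebra _
    · exact zero_mem _

theorem slitCount_diagSteps_axis {i n : ℕ} (hn : i ≤ n) :
    slitCount diagSteps (2 * i) 0 (2 * n) = i.centralBinom * coeff n (kernelRoot ^ i) := by
  have series_eq := congrArg (fun f => (coeff (2 * n) f).coeff (i * 2))
    slitAxisSeries_diagStepFinset
  simp only [slitAxisSeries, coeff_mk, coeff_slitPoly, coeff_expand_mul, coe_diagStepFinset]
    at series_eq
  rw [coeff_coeff_kernelFactor two_ne_zero hn] at series_eq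
  rw [mul_comm]
  exact_mod_cast series_eq

end DiagonalSteps

end SlitPlane

/-- for walks with diagonal steps, for `i ≥ 1` and `n ≥ i`,
`a_{2i,0}(2n) = (i/n)·binom(2i,i)·binom(2n,n−i)·4^{n−i}`
(stated multiplied by `n` to stay in ℕ). -/
theorem diag_slit_count_axis (i n : ℕ) (hi : 1 ≤ i) (hn : i ≤ n) :
    n * slitCount diagSteps (2 * i) 0 (2 * n)
      = i * Nat.choose (2 * i) i * Nat.choose (2 * n) (n - i) * 4 ^ (n - i) := by
  rw [SlitPlane.slitCount_diagSteps_axis hn, mul_left_comm, SlitPlane.mul_coeff_kernelRoot_pow hn,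
    Nat.centralBinom_eq_two_mul_choose]
  ring
end

section
/- One has ∑_{n≥0} a_{0,1}(n)/4ⁿ = 1/2 and ∑_{n≥0} a_{1,0}(n)/4ⁿ = 2 − √2 (both series converge). Probabilistically: a simple random walk on ℤ² started at (0,1) (resp. (1,0)), stopped at its first visit to the half-line H = {(k,0) : k ≤ 0}, stops at the origin with probability 1/2 (resp. 2 − √2). -/
open Filter

/-!
Let `F(z)` be the generating function, by length (weight `t < 1/4`) and abscissa, of the walks
ending on the positive axis, and `G(z⁻¹)` that of the defect on the half-line of the functional
equation for all walks. Pairing this equation with the wave `xⁱ Y^|j|`, where `|x| = 1` and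
`Y + Y⁻¹ = c := t⁻¹ - x - x⁻¹`, gives `G(x⁻¹) = t √(c² - 4) F(x)`. Squaring and factoring
`αβ (c² - 4) = (1 - αx)(1 - αx⁻¹)(1 - βx)(1 - βx⁻¹)` with `0 < α, β < 1`, one gets that
`t² (1 - αx)(1 - βx) F(x)²` extends analytically both inside and outside the unit circle, hence is
constant. Its expansion at `0` gives the generating functions for `(1, 0)` and, through the
equation at the origin, `(0, 1)` in closed form. They converge as `t → 1/4`, and since the
coefficients are nonnegative the series then converge at `t = 1/4`.
-/

open Metric
open scoped ENNReal Finset Topology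

section WalkCounting

variable {A : Set (ℤ × ℤ)} {S : Finset (ℤ × ℤ)} {n : ℕ} {p : ℤ × ℤ}

/-- The walks on the slit plane with steps in `A`, of length `n` and ending at `p`; `slitCount`
counts them. -/
abbrev SlitWalksTo (A : Set (ℤ × ℤ)) (n : ℕ) (p : ℤ × ℤ) : Type :=
  {w : Fin (n + 1) → ℤ × ℤ // IsSlitWalk A n w ∧ w (Fin.last n) = p}

lemma isSlitWalk_snoc_iff {w : Fin (n + 1) → ℤ × ℤ} :
    IsSlitWalk A (n + 1) (Fin.snoc (α := fun _ ↦ ℤ × ℤ) w p) ↔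
      IsSlitWalk A n w ∧ p - w (Fin.last n) ∈ A ∧ p ∉ slitH := by
  have h_zero : Fin.snoc (α := fun _ ↦ ℤ × ℤ) w p 0 = w 0 :=
    Fin.snoc_castSucc (α := fun _ ↦ ℤ × ℤ) p w 0
  simp only [IsSlitWalk, Fin.forall_fin_succ' (n := n), Fin.forall_fin_succ' (n := n + 1), h_zero,
    Fin.succ_castSucc, Fin.succ_last, Fin.snoc_castSucc, Fin.snoc_last, Fin.val_castSucc,
    Fin.val_last]
  grind

lemma sigma_slitWalksTo_ext {x y : Σ e : A, SlitWalksTo A n (p - e)} (h : x.2.1 = y.2.1) :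
    x = y := by
  obtain ⟨⟨e, he⟩, w, hw, hlast⟩ := x
  obtain ⟨⟨e', he'⟩, w', hw', hlast'⟩ := y
  obtain rfl : w = w' := h
  obtain rfl : e = e' := sub_right_injective (hlast.symm.trans hlast')
  rfl

/-- A walk to `p` is its last step `e` together with a walk to `p - e`. -/
def slitWalksToSuccEquiv (A : Set (ℤ × ℤ)) (n : ℕ) (hp : p ∉ slitH) :
    SlitWalksTo A (n + 1) p ≃ Σ e : A, SlitWalksTo A n (p - e) where
  toFun w :=
    have h := isSlitWalk_snoc_iff.1 ((congrArg _ (Fin.snoc_init_self w.1)).mpr w.2.1)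
    ⟨⟨p - Fin.init w.1 (Fin.last n), by simpa only [w.2.2] using h.2.1⟩,
      Fin.init w.1, h.1, (sub_sub_cancel _ _).symm⟩
  invFun w := ⟨Fin.snoc (α := fun _ ↦ ℤ × ℤ) w.2.1 p,
    isSlitWalk_snoc_iff.2 ⟨w.2.2.1, by simp [w.2.2.2], hp⟩, Fin.snoc_last _ _⟩
  left_inv := by
    rintro ⟨w, -, hlast⟩
    exact Subtype.ext (hlast ▸ Fin.snoc_init_self w)
  right_inv w := sigma_slitWalksTo_ext (Fin.init_snoc (α := fun _ ↦ ℤ × ℤ) p w.2.1)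

instance subsingleton_slitWalksTo_zero : Subsingleton (SlitWalksTo A 0 p) where
  allEq w w' := Subtype.ext <| funext fun m ↦ by
    rw [Subsingleton.elim (α := Fin 1) m 0, w.2.1.1, w'.2.1.1]

lemma isEmpty_slitWalksTo_succ (hp : p ∈ slitH) : IsEmpty (SlitWalksTo A (n + 1) p) :=
  ⟨fun w ↦ w.2.1.2.2 (Fin.last _) (by simp) (w.2.2.symm ▸ hp)⟩

lemma finite_slitWalksTo (S : Finset (ℤ × ℤ)) (n : ℕ) (p : ℤ × ℤ) :
    Finite (SlitWalksTo S n p) := by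
  induction n generalizing p with
  | zero => infer_instance
  | succ n ih =>
    by_cases hp : p ∈ slitH
    · have := isEmpty_slitWalksTo_succ (A := S) (n := n) hp
      infer_instance
    · exact Finite.of_equiv _ (slitWalksToSuccEquiv S n hp).symm

lemma slitCount_zero (A : Set (ℤ × ℤ)) (p : ℤ × ℤ) :
    slitCount A p.1 p.2 0 = if p = 0 then 1 else 0 := by
  split_ifs with hp
  · have walk_to_zero : SlitWalksTo A 0 p :=
      ⟨fun _ ↦ 0, ⟨rfl, fun m ↦ m.elim0, fun m hm ↦ by omega⟩, hp.symm⟩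
    exact Nat.card_of_subsingleton walk_to_zero
  · have : IsEmpty (SlitWalksTo A 0 p) := ⟨fun w ↦ hp (w.2.2.symm.trans w.2.1.1)⟩
    exact Nat.card_of_isEmpty (α := SlitWalksTo A 0 p)

lemma slitCount_succ_of_mem (hp : p ∈ slitH) : slitCount A p.1 p.2 (n + 1) = 0 :=
  have := isEmpty_slitWalksTo_succ (A := A) (n := n) hp
  Nat.card_of_isEmpty (α := SlitWalksTo A (n + 1) p)

lemma slitCount_succ_of_notMem (hp : p ∉ slitH) :
    slitCount S p.1 p.2 (n + 1) = ∑ e ∈ S, slitCount S (p - e).1 (p - e).2 n := by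
  have := finite_slitWalksTo S n
  calc slitCount S p.1 p.2 (n + 1)
    _ = ∑ e : S, Nat.card (SlitWalksTo S n (p - e)) :=
      (Nat.card_congr (slitWalksToSuccEquiv S n hp)).trans Nat.card_sigma
    _ = ∑ e ∈ S, slitCount S (p - e).1 (p - e).2 n :=
      Finset.sum_coe_sort S fun e ↦ slitCount S (p - e).1 (p - e).2 n

lemma slitCount_succ_le (S : Finset (ℤ × ℤ)) (n : ℕ) (p : ℤ × ℤ) :
    slitCount S p.1 p.2 (n + 1) ≤ ∑ e ∈ S, slitCount S (p - e).1 (p - e).2 n := by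
  by_cases hp : p ∈ slitH
  · exact (slitCount_succ_of_mem hp).trans_le (Nat.zero_le _)
  · exact (slitCount_succ_of_notMem hp).le

lemma tsum_slitCount_le (S : Finset (ℤ × ℤ)) (n : ℕ) :
    ∑' p : ℤ × ℤ, (slitCount S p.1 p.2 n : ℝ≥0∞) ≤ (#S : ℝ≥0∞) ^ n := by
  induction n with
  | zero => simp [slitCount_zero]
  | succ n ih =>
    calc ∑' p : ℤ × ℤ, (slitCount S p.1 p.2 (n + 1) : ℝ≥0∞)
      _ ≤ ∑' p : ℤ × ℤ, ∑ e ∈ S, (slitCount S (p - e).1 (p - e).2 n : ℝ≥0∞) :=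
        ENNReal.tsum_le_tsum fun p ↦ by exact_mod_cast slitCount_succ_le S n p
      _ = ∑ e ∈ S, ∑' p : ℤ × ℤ, (slitCount S (p - e).1 (p - e).2 n : ℝ≥0∞) :=
        Summable.tsum_finsetSum fun _ _ ↦ ENNReal.summable
      _ = #S * ∑' p : ℤ × ℤ, (slitCount S p.1 p.2 n : ℝ≥0∞) := by
        simp only [fun e ↦ (Equiv.subRight e).tsum_eq
          fun p : ℤ × ℤ ↦ (slitCount S p.1 p.2 n : ℝ≥0∞), ← Equiv.subRight_apply]
        rw [Finset.sum_const, nsmul_eq_mul]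
      _ ≤ (#S : ℝ≥0∞) ^ (n + 1) := by
        rw [pow_succ']
        gcongr

lemma slitCount_addEquiv (σ : ℤ × ℤ ≃+ ℤ × ℤ) (hA : ∀ e, σ e ∈ A ↔ e ∈ A)
    (hH : ∀ p, σ p ∈ slitH ↔ p ∈ slitH) (p : ℤ × ℤ) (n : ℕ) :
    slitCount A (σ p).1 (σ p).2 n = slitCount A p.1 p.2 n := by
  refine (Nat.card_congr <| (Equiv.piCongrRight fun _ ↦ σ.toEquiv).subtypeEquiv fun w ↦ ?_).symm
  have h_zero (q : ℤ × ℤ) : σ q = (0, 0) ↔ q = (0, 0) := EmbeddingLike.map_eq_zero_iff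
  simp [IsSlitWalk, ← map_sub, hA, hH, h_zero]

end WalkCounting

section StepDefect

variable {G : Type*} [AddCommGroup G]

/-- The operator `f ↦ f - t ∑ₑ f(· - e)`, which inverts the Green function of the unrestricted walk
with steps in `S`, each of weight `t`. -/
def stepDefect (S : Finset G) (t : ℝ) (f : G → ℝ) (p : G) : ℝ :=
  f p - t * ∑ e ∈ S, f (p - e)

variable {S : Finset G} {t : ℝ} {f : G → ℝ}

lemma summable_stepDefect (hf : Summable f) : Summable (stepDefect S t f) :=
  hf.sub <| (summable_sum fun e _ ↦ (Equiv.subRight e).summable_iff.2 hf).mul_left t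

variable {E : Type*} [NormedAddCommGroup E] [NormedSpace ℝ E] [CompleteSpace E]

lemma tsum_stepDefect_smul (hf : Summable f) {φ : G → E} {C : ℝ} (hφ : ∀ p, ‖φ p‖ ≤ C) :
    ∑' p, stepDefect S t f p • φ p = ∑' p, f p • (φ p - t • ∑ e ∈ S, φ (p + e)) := by
  have h_summable (e : G) : Summable fun p ↦ f p • φ (p + e) :=
    .of_norm_bounded (hf.norm.mul_right C) fun p ↦ by
      rw [norm_smul]
      gcongr
      exact hφ _
  have h_shift (e : G) : HasSum (fun p ↦ f (p - e) • φ p) (∑' p, f p • φ (p + e)) := by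
    rw [← (Equiv.addRight e).hasSum_iff]
    simpa [Function.comp_def] using (h_summable e).hasSum
  have h_base : HasSum (fun p ↦ f p • φ p) (∑' p, f p • φ p) := by simpa using h_shift 0
  have h_left := h_base.sub ((hasSum_sum fun e (_ : e ∈ S) ↦ h_shift e).const_smul t)
  have h_right :=
    h_base.sub ((hasSum_sum fun e (_ : e ∈ S) ↦ (h_summable e).hasSum).const_smul t)
  simp only [stepDefect, sub_smul, mul_smul, Finset.sum_smul, smul_sub, Finset.smul_sum] at *
  simp only [smul_comm _ t]
  exact h_left.tsum_eq.trans h_right.tsum_eq.symm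

end StepDefect

section GeneratingFunction

variable {S : Finset (ℤ × ℤ)} {t : ℝ} {p : ℤ × ℤ}

/-- The length generating function `∑ₙ a_p(n) tⁿ` of the walks on the slit plane ending at `p`. -/
noncomputable def slitGF (S : Finset (ℤ × ℤ)) (t : ℝ) (p : ℤ × ℤ) : ℝ :=
  ∑' n, (slitCount S p.1 p.2 n : ℝ) * t ^ n

/-- The defect of the functional equation satisfied by `slitGF`. It vanishes off the half-line, and
at `-(k, 0)` it is the generating function, with sign changed, of the walks that leave the origin
and first return to the half-line at that point (plus `1` if `k = 0`). -/
noncomputable def slitDefect (S : Finset (ℤ × ℤ)) (t : ℝ) : ℤ × ℤ → ℝ :=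
  stepDefect S t (slitGF S t)

lemma summable_slitCount_mul_pow (ht₀ : 0 ≤ t) (ht : #S * t < 1) :
    Summable fun x : (ℤ × ℤ) × ℕ ↦ (slitCount S x.1.1 x.1.2 x.2 : ℝ) * t ^ x.2 := by
  have h_le : ∑' x : (ℤ × ℤ) × ℕ, (slitCount S x.1.1 x.1.2 x.2 : ℝ≥0∞) * ENNReal.ofReal t ^ x.2 ≤
      (1 - #S * ENNReal.ofReal t)⁻¹ := by
    rw [ENNReal.tsum_prod', ENNReal.tsum_comm, ← ENNReal.tsum_geometric]
    gcongr with n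
    simp only [ENNReal.tsum_mul_right, mul_pow]
    gcongr
    exact tsum_slitCount_le S n
  have h_lt : (#S : ℝ≥0∞) * ENNReal.ofReal t < 1 := by
    rw [← ENNReal.ofReal_natCast, ← ENNReal.ofReal_mul (Nat.cast_nonneg _)]
    exact ENNReal.ofReal_lt_one.2 ht
  have h_ne_top := ne_top_of_le_ne_top (ENNReal.inv_ne_top.2 (tsub_pos_of_lt h_lt).ne') h_le
  simpa [ht₀] using ENNReal.summable_toReal h_ne_top

lemma summable_slitCount_mul_pow_length (ht₀ : 0 ≤ t) (ht : #S * t < 1) (p : ℤ × ℤ) :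
    Summable fun n ↦ (slitCount S p.1 p.2 n : ℝ) * t ^ n :=
  (summable_slitCount_mul_pow ht₀ ht).prod_factor p

lemma summable_slitGF (ht₀ : 0 ≤ t) (ht : #S * t < 1) : Summable (slitGF S t) :=
  (summable_slitCount_mul_pow ht₀ ht).prod

lemma slitGF_nonneg (ht₀ : 0 ≤ t) (p : ℤ × ℤ) : 0 ≤ slitGF S t p :=
  tsum_nonneg fun _ ↦ by positivity

lemma slitGF_eq_add (ht₀ : 0 ≤ t) (ht : #S * t < 1) (p : ℤ × ℤ) :
    slitGF S t p =
      (if p = 0 then 1 else 0) + ∑' n, (slitCount S p.1 p.2 (n + 1) : ℝ) * t ^ (n + 1) := by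
  rw [slitGF, (summable_slitCount_mul_pow_length ht₀ ht p).tsum_eq_zero_add, slitCount_zero]
  simp

lemma slitGF_of_mem (ht₀ : 0 ≤ t) (ht : #S * t < 1) (hp : p ∈ slitH) :
    slitGF S t p = if p = 0 then 1 else 0 := by
  simp [slitGF_eq_add ht₀ ht, slitCount_succ_of_mem hp]

lemma slitGF_of_notMem (ht₀ : 0 ≤ t) (ht : #S * t < 1) (hp : p ∉ slitH) :
    slitGF S t p = t * ∑ e ∈ S, slitGF S t (p - e) := by
  have hp_ne : p ≠ 0 := by
    rintro rfl
    exact hp ⟨rfl, le_rfl⟩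
  have h_sum := (hasSum_sum fun e (_ : e ∈ S) ↦
    (summable_slitCount_mul_pow_length ht₀ ht (p - e)).hasSum).mul_left t
  rw [slitGF_eq_add ht₀ ht, if_neg hp_ne, zero_add]
  refine Eq.trans (tsum_congr fun n ↦ ?_) h_sum.tsum_eq
  rw [slitCount_succ_of_notMem hp, ← Finset.sum_mul]
  push_cast
  ring

lemma slitDefect_of_notMem (ht₀ : 0 ≤ t) (ht : #S * t < 1) (hp : p ∉ slitH) :
    slitDefect S t p = 0 :=
  sub_eq_zero.2 (slitGF_of_notMem ht₀ ht hp)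

lemma slitDefect_nonpos (ht₀ : 0 ≤ t) (ht : #S * t < 1) (hp : p ≠ 0) : slitDefect S t p ≤ 0 := by
  by_cases hpH : p ∈ slitH
  · rw [slitDefect, stepDefect, slitGF_of_mem ht₀ ht hpH, if_neg hp, zero_sub, neg_nonpos]
    exact mul_nonneg ht₀ (Finset.sum_nonneg fun e _ ↦ slitGF_nonneg ht₀ _)
  · exact (slitDefect_of_notMem ht₀ ht hpH).le

lemma summable_slitDefect (ht₀ : 0 ≤ t) (ht : #S * t < 1) : Summable (slitDefect S t) :=
  summable_stepDefect (summable_slitGF ht₀ ht)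

lemma tsum_slitDefect (ht₀ : 0 ≤ t) (ht : #S * t < 1) :
    ∑' p, slitDefect S t p = (1 - #S * t) * ∑' p, slitGF S t p := by
  have h := tsum_stepDefect_smul (S := S) (t := t) (summable_slitGF ht₀ ht) (φ := fun _ ↦ (1 : ℝ))
    (fun _ ↦ norm_one.le)
  simpa [slitDefect, tsum_mul_right, mul_comm] using h

lemma slitDefect_zero_nonneg (ht₀ : 0 ≤ t) (ht : #S * t < 1) : 0 ≤ slitDefect S t 0 :=
  calc 0 ≤ (1 - #S * t) * ∑' p, slitGF S t p :=
        mul_nonneg (by linarith) (tsum_nonneg (slitGF_nonneg ht₀))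
    _ = ∑' p, slitDefect S t p := (tsum_slitDefect ht₀ ht).symm
    _ ≤ ∑' p : ℤ × ℤ, if p = 0 then slitDefect S t 0 else 0 := by
        refine (summable_slitDefect ht₀ ht).tsum_le_tsum (fun p ↦ ?_)
          (hasSum_ite_eq 0 (slitDefect S t 0)).summable
        split_ifs with hp
        · rw [hp]
        · exact slitDefect_nonpos ht₀ ht hp
    _ = slitDefect S t 0 := tsum_ite_eq 0 _

lemma slitGF_addEquiv (σ : ℤ × ℤ ≃+ ℤ × ℤ) (hS : ∀ e, σ e ∈ S ↔ e ∈ S)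
    (hH : ∀ p, σ p ∈ slitH ↔ p ∈ slitH) (p : ℤ × ℤ) : slitGF S t (σ p) = slitGF S t p := by
  simp only [slitGF, slitCount_addEquiv σ hS hH]

end GeneratingFunction

section DiscSeries

lemma diffContOnCl_tsum_mul_pow {a : ℕ → ℂ} (ha : Summable fun k ↦ ‖a k‖) :
    DiffContOnCl ℂ (fun z ↦ ∑' k, a k * z ^ k) (ball 0 1) := by
  have h_bound (k : ℕ) (z : ℂ) (hz : z ∈ closedBall (0 : ℂ) 1) : ‖a k * z ^ k‖ ≤ ‖a k‖ := by
    rw [mem_closedBall_zero_iff] at hz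
    rw [norm_mul, norm_pow]
    exact mul_le_of_le_one_right (norm_nonneg _) (pow_le_one₀ (norm_nonneg _) hz)
  refine .mk_ball ?_ (continuousOn_tsum (fun k ↦ by fun_prop) ha h_bound)
  exact Complex.differentiableOn_tsum_of_summable_norm ha (fun k ↦ by fun_prop) isOpen_ball
    fun k z hz ↦ h_bound k z (ball_subset_closedBall hz)

lemma hasDerivAt_tsum_mul_pow_zero {a : ℕ → ℂ} (ha : Summable fun k ↦ ‖a k‖) :
    HasDerivAt (fun z ↦ ∑' k, a k * z ^ k) (a 1) 0 := by
  let p := FormalMultilinearSeries.ofScalars ℂ a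
  have h_radius : 1 ≤ p.radius := by
    refine p.le_radius_of_summable_norm (r := 1) ?_
    simpa [p, FormalMultilinearSeries.ofScalars_norm] using ha
  have h_sum : p.sum = fun z ↦ ∑' k, a k * z ^ k :=
    funext fun z ↦ by simp [p, FormalMultilinearSeries.sum, smul_eq_mul, mul_comm]
  have h := (p.hasFPowerSeriesOnBall (zero_lt_one.trans_le h_radius)).hasFPowerSeriesAt.hasDerivAt
  simpa [h_sum, p] using h

lemma tsum_mul_zero_pow (a : ℕ → ℂ) : ∑' k, a k * 0 ^ k = a 0 := by
  rw [tsum_eq_single 0 fun k hk ↦ by simp [hk]]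
  simp

lemma one_sub_mul_ne_zero {w z : ℂ} (hw : ‖w‖ < 1) (hz : ‖z‖ ≤ 1) : 1 - w * z ≠ 0 := by
  intro h
  have h_norm : ‖w‖ * ‖z‖ = 1 := by rw [← norm_mul, ← sub_eq_zero.1 h, norm_one]
  nlinarith [norm_nonneg w, norm_nonneg z]

/-- Liouville's theorem on the Riemann sphere: `P` inside the circle and `z ↦ Q z⁻¹` outside it glue
along the circle. -/
lemma eq_of_eqOn_sphere_comp_inv {P Q : ℂ → ℂ} (hP : DiffContOnCl ℂ P (ball 0 1))
    (hQ : DiffContOnCl ℂ Q (ball 0 1)) (hPQ : ∀ z, ‖z‖ = 1 → P z = Q z⁻¹) {w : ℂ} (hw : ‖w‖ < 1) :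
    P w = Q 0 := by
  have h_inv : DiffContOnCl ℂ (fun z ↦ (1 - w * z)⁻¹) (ball 0 1) := by
    refine DiffContOnCl.inv (Differentiable.diffContOnCl (by fun_prop)) fun z hz ↦ ?_
    rw [closure_ball _ one_ne_zero, mem_closedBall_zero_iff] at hz
    exact one_sub_mul_ne_zero hw hz
  let R : ℂ → ℂ := fun z ↦ (1 - w * z)⁻¹ • Q z
  have hR : DiffContOnCl ℂ R (ball 0 |1|) := by
    rw [abs_one]
    exact h_inv.smul hQ
  calc P w
    _ = Real.circleAverage (fun z ↦ ((z - 0) / (z - w)) • P z) 0 1 :=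
      (DiffContOnCl.circleAverage_smul_div (by simpa using hP) (by simpa using hw)).symm
    _ = Real.circleAverage (fun z ↦ R z⁻¹) 0 1 := by
      refine Real.circleAverage_congr_sphere fun z hz ↦ ?_
      have hz_norm : ‖z‖ = 1 := by simpa using hz
      have hz_ne : z ≠ 0 := norm_ne_zero_iff.1 (by simp [hz_norm])
      have h_factor : (z - 0) / (z - w) = (1 - w * z⁻¹)⁻¹ := by
        rw [sub_zero, ← div_eq_mul_inv, one_sub_div hz_ne, inv_div]
      simp only [R, hPQ z hz_norm, h_factor]
    _ = Q 0 := by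
      rw [Real.circleAverage_zero_one_congr_inv, hR.circleAverage]
      simp [R]

end DiscSeries

section SmallRoot

/-- For `2 ≤ c`, the root in `[0, 1]` of `Y + Y⁻¹ = c`: the rate at which a wave on the lattice can
decay away from the slit. -/
noncomputable def smallRoot (c : ℝ) : ℝ := (c - √(c ^ 2 - 4)) / 2

variable {c : ℝ}

@[fun_prop]
lemma continuous_smallRoot : Continuous smallRoot := by
  unfold smallRoot
  fun_prop

lemma sub_two_mul_smallRoot (c : ℝ) : c - 2 * smallRoot c = √(c ^ 2 - 4) := by
  unfold smallRoot
  ring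

lemma smallRoot_sq_add_one (hc : 2 ≤ c) : smallRoot c ^ 2 + 1 = c * smallRoot c := by
  have h_sq := Real.sq_sqrt (show 0 ≤ c ^ 2 - 4 by nlinarith)
  rw [← sub_two_mul_smallRoot] at h_sq
  linarith

lemma smallRoot_pos (hc : 2 ≤ c) : 0 < smallRoot c := by
  have : √(c ^ 2 - 4) < c := (Real.sqrt_lt' (by linarith)).2 (by linarith)
  unfold smallRoot
  linarith

lemma smallRoot_lt_one (hc : 2 < c) : smallRoot c < 1 := by
  have : c - 2 < √(c ^ 2 - 4) := Real.lt_sqrt_of_sq_lt (by nlinarith)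
  unfold smallRoot
  linarith

lemma smallRoot_two : smallRoot 2 = 1 := by norm_num [smallRoot]

lemma smallRoot_six : smallRoot 6 = (√2 - 1) ^ 2 := by
  have h_sq : √2 ^ 2 = 2 := Real.sq_sqrt zero_le_two
  have h_sqrt : √(6 ^ 2 - 4) = 4 * √2 := by
    rw [show (6 ^ 2 - 4 : ℝ) = 4 ^ 2 * 2 by norm_num, Real.sqrt_mul (by norm_num),
      Real.sqrt_sq (by norm_num)]
  rw [smallRoot, h_sqrt]
  linarith

lemma smallRoot_mul_sub_add_inv (hc : 2 ≤ c) {z : ℂ} (hz : z ≠ 0) :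
    smallRoot c * (c - (z + z⁻¹)) = (1 - smallRoot c * z) * (1 - smallRoot c * z⁻¹) := by
  have h_root : (smallRoot c : ℂ) ^ 2 + 1 = c * smallRoot c := by
    exact_mod_cast smallRoot_sq_add_one hc
  linear_combination (-(smallRoot c : ℂ) ^ 2) * mul_inv_cancel₀ hz - h_root

lemma norm_smallRoot_lt_one (hc : 2 < c) : ‖(smallRoot c : ℂ)‖ < 1 := by
  rw [Complex.norm_of_nonneg (smallRoot_pos hc.le).le]
  exact smallRoot_lt_one hc

end SmallRoot

section Tauberian

lemma hasSum_mul_pow_of_tendsto {d : ℕ → ℝ} {r v : ℝ} (hd : ∀ n, 0 ≤ d n) (hr : 0 < r)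
    (h_summable : ∀ t, 0 ≤ t → t < r → Summable fun n ↦ d n * t ^ n)
    (hv : Tendsto (fun t ↦ ∑' n, d n * t ^ n) (𝓝[<] r) (𝓝 v)) :
    HasSum (fun n ↦ d n * r ^ n) v := by
  have h_mem : ∀ᶠ t in 𝓝[<] r, t ∈ Set.Ioo 0 r := Ioo_mem_nhdsLT hr
  have h_partial (u : Finset ℕ) : ∑ n ∈ u, d n * r ^ n ≤ v := by
    have h_cont : Continuous fun t ↦ ∑ n ∈ u, d n * t ^ n := by fun_prop
    refine le_of_tendsto_of_tendsto (h_cont.continuousWithinAt (s := Set.Iio r)) hv ?_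
    filter_upwards [h_mem] with t ht
    exact (h_summable t ht.1.le ht.2).sum_le_tsum u fun n _ ↦
      mul_nonneg (hd n) (pow_nonneg ht.1.le n)
  have h_nonneg (n : ℕ) : 0 ≤ d n * r ^ n := mul_nonneg (hd n) (pow_nonneg hr.le n)
  have h_sum : Summable fun n ↦ d n * r ^ n := summable_of_sum_le h_nonneg h_partial
  have h_ge : v ≤ ∑' n, d n * r ^ n := by
    refine le_of_tendsto hv ?_
    filter_upwards [h_mem] with t ht
    refine (h_summable t ht.1.le ht.2).tsum_le_tsum (fun n ↦ ?_) h_sum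
    have := hd n
    have := ht.1.le
    have := ht.2.le
    gcongr
  exact (h_sum.tsum_le_of_sum_le h_partial).antisymm h_ge ▸ h_sum.hasSum

end Tauberian

section AxisSeries

variable {S : Finset (ℤ × ℤ)} {t : ℝ}

/-- The generating function of the walks on the slit plane that end on the positive axis (or have
length `0`), the variable `z` recording the abscissa of the end point. -/
noncomputable def slitAxisGF (S : Finset (ℤ × ℤ)) (t : ℝ) (z : ℂ) : ℂ :=
  ∑' k : ℕ, (slitGF S t (k, 0) : ℂ) * z ^ k

/-- The generating function of `slitDefect`, the exponent of `z` being the distance to the origin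
along the half-line. -/
noncomputable def slitDefectAxisGF (S : Finset (ℤ × ℤ)) (t : ℝ) (z : ℂ) : ℂ :=
  ∑' k : ℕ, (slitDefect S t (-k, 0) : ℂ) * z ^ k

lemma injective_natCast_zero : Function.Injective fun k : ℕ ↦ ((k : ℤ), (0 : ℤ)) :=
  fun k l h ↦ by simpa using h

lemma injective_neg_natCast_zero : Function.Injective fun k : ℕ ↦ (-(k : ℤ), (0 : ℤ)) :=
  fun k l h ↦ by simpa using h

lemma summable_norm_slitGF_axis (ht₀ : 0 ≤ t) (ht : #S * t < 1) :
    Summable fun k : ℕ ↦ ‖(slitGF S t (k, 0) : ℂ)‖ := by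
  simpa using ((summable_slitGF ht₀ ht).comp_injective injective_natCast_zero).norm

lemma summable_norm_slitDefect_axis (ht₀ : 0 ≤ t) (ht : #S * t < 1) :
    Summable fun k : ℕ ↦ ‖(slitDefect S t (-k, 0) : ℂ)‖ := by
  simpa using ((summable_slitDefect ht₀ ht).comp_injective injective_neg_natCast_zero).norm

lemma diffContOnCl_slitAxisGF (ht₀ : 0 ≤ t) (ht : #S * t < 1) :
    DiffContOnCl ℂ (slitAxisGF S t) (ball 0 1) :=
  diffContOnCl_tsum_mul_pow (summable_norm_slitGF_axis ht₀ ht)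

lemma diffContOnCl_slitDefectAxisGF (ht₀ : 0 ≤ t) (ht : #S * t < 1) :
    DiffContOnCl ℂ (slitDefectAxisGF S t) (ball 0 1) :=
  diffContOnCl_tsum_mul_pow (summable_norm_slitDefect_axis ht₀ ht)

lemma slitAxisGF_zero (ht₀ : 0 ≤ t) (ht : #S * t < 1) : slitAxisGF S t 0 = 1 := by
  rw [slitAxisGF, tsum_mul_zero_pow, slitGF_of_mem ht₀ ht (by simp [slitH])]
  simp

lemma slitDefectAxisGF_zero (S : Finset (ℤ × ℤ)) (t : ℝ) :
    slitDefectAxisGF S t 0 = slitDefect S t 0 := by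
  rw [slitDefectAxisGF, tsum_mul_zero_pow]
  simp [Prod.zero_eq_mk]

lemma hasDerivAt_slitAxisGF_zero (ht₀ : 0 ≤ t) (ht : #S * t < 1) :
    HasDerivAt (slitAxisGF S t) (slitGF S t (1, 0)) 0 := by
  exact_mod_cast hasDerivAt_tsum_mul_pow_zero (summable_norm_slitGF_axis ht₀ ht)

variable {E : Type*} [NormedAddCommGroup E] [NormedSpace ℝ E]

lemma tsum_slitGF_smul_axis (ht₀ : 0 ≤ t) (ht : #S * t < 1) (g : ℤ → E) :
    ∑' p : ℤ × ℤ, slitGF S t p • (if p.2 = 0 then g p.1 else 0) =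
      ∑' k : ℕ, slitGF S t (k, 0) • g k := by
  have h_support : Function.support (fun p : ℤ × ℤ ↦
      slitGF S t p • (if p.2 = 0 then g p.1 else 0)) ⊆
        Set.range fun k : ℕ ↦ ((k : ℤ), (0 : ℤ)) := by
    rintro ⟨i, j⟩ hp
    obtain rfl : j = 0 := by
      by_contra hj
      simp [hj] at hp
    rcases le_or_gt 0 i with hi | hi
    · exact ⟨i.toNat, by simp [hi]⟩
    · simp [slitGF_of_mem ht₀ ht (p := (i, 0)) ⟨rfl, hi.le⟩, hi.ne] at hp
  simpa using (injective_natCast_zero.tsum_eq h_support).symm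

lemma tsum_slitDefect_smul (ht₀ : 0 ≤ t) (ht : #S * t < 1) (φ : ℤ × ℤ → E) :
    ∑' p, slitDefect S t p • φ p = ∑' k : ℕ, slitDefect S t (-k, 0) • φ (-k, 0) := by
  refine (injective_neg_natCast_zero.tsum_eq fun p hp ↦ ?_).symm
  by_cases hpH : p ∈ slitH
  · exact ⟨p.1.natAbs, Prod.ext (by have := hpH.2; dsimp only; omega) hpH.1.symm⟩
  · simp [slitDefect_of_notMem ht₀ ht hpH] at hp

end AxisSeries

section SquareLattice

variable {t : ℝ}

/-- The step set `sqSteps` as a `Finset`, over which one can sum. -/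
def sqStepFinset : Finset (ℤ × ℤ) := {(1, 0), (-1, 0), (0, 1), (0, -1)}

lemma coe_sqStepFinset : (sqStepFinset : Set (ℤ × ℤ)) = sqSteps := by
  simp [sqStepFinset, sqSteps]

lemma card_sqStepFinset : #sqStepFinset = 4 := rfl

lemma sum_sqStepFinset {M : Type*} [AddCommMonoid M] (f : ℤ × ℤ → M) :
    ∑ e ∈ sqStepFinset, f e = f (1, 0) + (f (-1, 0) + (f (0, 1) + f (0, -1))) := by
  simp [sqStepFinset]

lemma card_sqStepFinset_mul_lt_one (ht : t < 1 / 4) : #sqStepFinset * t < 1 := by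
  rw [card_sqStepFinset, Nat.cast_ofNat]
  linarith

/-- The wave with multiplier `x` per step along the slit and `Y` per step away from it. For a
suitable `Y` its defect vanishes off the horizontal axis, so that pairing it with `slitGF` only
involves the boundary series `slitAxisGF` and `slitDefectAxisGF`. -/
noncomputable def axisWave (x Y : ℂ) (p : ℤ × ℤ) : ℂ := x ^ p.1 * Y ^ p.2.natAbs

lemma norm_axisWave_le {x Y : ℂ} (hx : ‖x‖ = 1) (hY : ‖Y‖ ≤ 1) (p : ℤ × ℤ) :
    ‖axisWave x Y p‖ ≤ 1 := by
  rw [axisWave, norm_mul, norm_zpow, norm_pow, hx, one_zpow, one_mul]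
  exact pow_le_one₀ (norm_nonneg _) hY

lemma axisWave_sub_smul_sum {x Y c : ℂ} (hx : x ≠ 0) (hxc : t * (x + x⁻¹ + c) = 1)
    (hY : Y ^ 2 + 1 = c * Y) (p : ℤ × ℤ) :
    axisWave x Y p - t • ∑ e ∈ sqStepFinset, axisWave x Y (p + e) =
      if p.2 = 0 then t * (c - 2 * Y) * x ^ p.1 else 0 := by
  obtain ⟨i, j⟩ := p
  simp only [sum_sqStepFinset, axisWave, Prod.mk_add_mk, add_zero, zpow_add₀ hx, zpow_one,
    zpow_neg, Complex.real_smul]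
  split_ifs with hj
  · subst hj
    simp only [zero_add, Int.natAbs_neg, Int.natAbs_zero, Int.natAbs_one, pow_zero, pow_one]
    linear_combination -x ^ i * hxc
  · obtain ⟨k, hk⟩ := Nat.exists_eq_add_one_of_ne_zero (Int.natAbs_ne_zero.2 hj)
    have h_vertical : Y ^ (j + 1).natAbs + Y ^ (j + -1).natAbs = Y ^ k * (Y ^ 2 + 1) := by
      rcases lt_or_gt_of_ne hj with h_neg | h_pos
      · rw [show (j + 1).natAbs = k by omega, show (j + -1).natAbs = k + 2 by omega]
        ring
      · rw [show (j + 1).natAbs = k + 2 by omega, show (j + -1).natAbs = k by omega]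
        ring
    rw [hk]
    linear_combination (-t * x ^ i) * h_vertical - x ^ i * Y ^ (k + 1) * hxc -
      t * x ^ i * Y ^ k * hY

lemma slitDefectAxisGF_inv (ht₀ : 0 ≤ t) (ht : t < 1 / 4) {x : ℂ} (hx : ‖x‖ = 1) {c : ℝ}
    (hc : 2 < c) (hxc : t * (x + x⁻¹ + c) = 1) :
    slitDefectAxisGF sqStepFinset t x⁻¹ = t * √(c ^ 2 - 4) * slitAxisGF sqStepFinset t x := by
  have ht' := card_sqStepFinset_mul_lt_one ht
  have hx_ne : x ≠ 0 := norm_ne_zero_iff.1 (hx.trans_ne one_ne_zero)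
  have h_root : (smallRoot c : ℂ) ^ 2 + 1 = c * smallRoot c :=
    mod_cast smallRoot_sq_add_one hc.le
  have h_sqrt : (c : ℂ) - 2 * smallRoot c = √(c ^ 2 - 4) := mod_cast sub_two_mul_smallRoot c
  calc slitDefectAxisGF sqStepFinset t x⁻¹
    _ = ∑' p, slitDefect sqStepFinset t p • axisWave x (smallRoot c) p := by
      rw [tsum_slitDefect_smul ht₀ ht']
      simp [slitDefectAxisGF, axisWave]
    _ = ∑' p : ℤ × ℤ, slitGF sqStepFinset t p •
          if p.2 = 0 then t * √(c ^ 2 - 4) * x ^ p.1 else 0 := by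
      rw [slitDefect, tsum_stepDefect_smul (summable_slitGF ht₀ ht')
        (norm_axisWave_le hx (norm_smallRoot_lt_one hc).le)]
      simp only [axisWave_sub_smul_sum hx_ne hxc h_root, h_sqrt]
    _ = t * √(c ^ 2 - 4) * slitAxisGF sqStepFinset t x := by
      rw [tsum_slitGF_smul_axis ht₀ ht' fun i ↦ t * √(c ^ 2 - 4) * x ^ i, slitAxisGF,
        ← tsum_mul_left]
      exact tsum_congr fun k ↦ by rw [Complex.real_smul, zpow_natCast]; ring

/-- The Wiener–Hopf factor, analytic and zero-free on the closed unit disc, of the symbol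
`z ↦ (t⁻¹ - z - z⁻¹)² - 4`, which on the unit circle is, up to the factor `t²`, the square of the
multiplier in `slitDefectAxisGF_inv`. -/
noncomputable def slitFactor (t : ℝ) (z : ℂ) : ℂ :=
  (1 - smallRoot (t⁻¹ - 2) * z) * (1 - smallRoot (t⁻¹ + 2) * z)

lemma two_lt_inv_sub_two (ht₀ : 0 < t) (ht : t < 1 / 4) : 2 < t⁻¹ - 2 := by
  have : 4 < t⁻¹ := (lt_inv_comm₀ (by norm_num) ht₀).2 (by linarith)
  linarith

lemma two_lt_inv_add_two (ht₀ : 0 < t) : 2 < t⁻¹ + 2 := by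
  have := inv_pos.2 ht₀
  linarith

lemma smallRoot_mul_smallRoot_mul_symbol (ht₀ : 0 < t) (ht : t < 1 / 4) {z : ℂ} (hz : z ≠ 0) :
    smallRoot (t⁻¹ - 2) * smallRoot (t⁻¹ + 2) * (((t⁻¹ : ℝ) - (z + z⁻¹)) ^ 2 - 4) =
      slitFactor t z * slitFactor t z⁻¹ := by
  have h_minus := smallRoot_mul_sub_add_inv (two_lt_inv_sub_two ht₀ ht).le hz
  have h_plus := smallRoot_mul_sub_add_inv (two_lt_inv_add_two ht₀).le hz
  calc _ = (smallRoot (t⁻¹ - 2) * ((t⁻¹ - 2 : ℝ) - (z + z⁻¹))) *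
        (smallRoot (t⁻¹ + 2) * ((t⁻¹ + 2 : ℝ) - (z + z⁻¹))) := by push_cast; ring
    _ = slitFactor t z * slitFactor t z⁻¹ := by rw [h_minus, h_plus, slitFactor, slitFactor]; ring

lemma slitFactor_ne_zero (ht₀ : 0 < t) (ht : t < 1 / 4) {z : ℂ} (hz : ‖z‖ ≤ 1) :
    slitFactor t z ≠ 0 :=
  mul_ne_zero (one_sub_mul_ne_zero (norm_smallRoot_lt_one (two_lt_inv_sub_two ht₀ ht)) hz)
    (one_sub_mul_ne_zero (norm_smallRoot_lt_one (two_lt_inv_add_two ht₀)) hz)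

lemma differentiable_slitFactor (t : ℝ) : Differentiable ℂ (slitFactor t) := by
  unfold slitFactor
  fun_prop

lemma slitFactor_zero (t : ℝ) : slitFactor t 0 = 1 := by simp [slitFactor]

lemma hasDerivAt_slitFactor_zero (t : ℝ) :
    HasDerivAt (slitFactor t) (-(smallRoot (t⁻¹ - 2) + smallRoot (t⁻¹ + 2))) 0 := by
  have h (a : ℂ) : HasDerivAt (fun z ↦ 1 - a * z) (-a) 0 := by
    simpa using ((hasDerivAt_id (0 : ℂ)).const_mul a).const_sub 1
  refine ((h (smallRoot (t⁻¹ - 2))).mul (h (smallRoot (t⁻¹ + 2)))).congr_deriv ?_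
  rw [mul_zero, mul_zero]
  ring

lemma smallRoot_mul_slitDefectAxisGF_inv_sq (ht₀ : 0 < t) (ht : t < 1 / 4) {z : ℂ}
    (hz : ‖z‖ = 1) :
    smallRoot (t⁻¹ - 2) * smallRoot (t⁻¹ + 2) * slitDefectAxisGF sqStepFinset t z⁻¹ ^ 2 =
      t ^ 2 * (slitFactor t z * slitFactor t z⁻¹) * slitAxisGF sqStepFinset t z ^ 2 := by
  have hz_ne : z ≠ 0 := norm_ne_zero_iff.1 (hz.trans_ne one_ne_zero)
  have hz_add : z + z⁻¹ = (2 * z.re : ℝ) := by rw [Complex.inv_eq_conj hz, Complex.add_conj]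
  set c := t⁻¹ - 2 * z.re with hc_def
  have hc : 2 < c := by
    have := two_lt_inv_sub_two ht₀ ht
    have : z.re ≤ 1 := hz ▸ Complex.re_le_norm z
    linarith
  have hzc : t * (z + z⁻¹ + c) = 1 := by
    rw [hz_add, ← Complex.ofReal_add, hc_def, add_sub_cancel, ← Complex.ofReal_mul,
      mul_inv_cancel₀ ht₀.ne', Complex.ofReal_one]
  have h_symbol : ((t⁻¹ : ℝ) - (z + z⁻¹)) ^ 2 - 4 = (√(c ^ 2 - 4) : ℂ) ^ 2 := by
    rw [hz_add]
    exact_mod_cast (Real.sq_sqrt (show 0 ≤ c ^ 2 - 4 by nlinarith)).symm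
  rw [slitDefectAxisGF_inv ht₀.le ht hz hc hzc, ← smallRoot_mul_smallRoot_mul_symbol ht₀ ht hz_ne,
    h_symbol]
  ring

lemma slitFactor_mul_slitAxisGF_sq_eq (ht₀ : 0 < t) (ht : t < 1 / 4) {w : ℂ} (hw : ‖w‖ < 1) :
    t ^ 2 * slitFactor t w * slitAxisGF sqStepFinset t w ^ 2 =
      smallRoot (t⁻¹ - 2) * smallRoot (t⁻¹ + 2) * slitDefectAxisGF sqStepFinset t 0 ^ 2 := by
  have ht' := card_sqStepFinset_mul_lt_one ht
  have hW := (differentiable_slitFactor t).diffContOnCl (s := ball 0 1)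
  have hF := diffContOnCl_slitAxisGF ht₀.le ht'
  have hG := diffContOnCl_slitDefectAxisGF ht₀.le ht'
  have hW_inv : DiffContOnCl ℂ (fun z ↦ (slitFactor t z)⁻¹) (ball 0 1) := by
    refine hW.inv fun z hz ↦ slitFactor_ne_zero ht₀ ht ?_
    rwa [closure_ball _ one_ne_zero, mem_closedBall_zero_iff] at hz
  have h := eq_of_eqOn_sphere_comp_inv ((hW.smul (hF.smul hF)).const_smul ((t : ℂ) ^ 2))
    ((hW_inv.smul (hG.smul hG)).const_smul (smallRoot (t⁻¹ - 2) * smallRoot (t⁻¹ + 2) : ℂ))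
    (fun z hz ↦ ?_) hw
  · simpa [slitFactor_zero, sq, mul_assoc] using h
  · have h_ne : slitFactor t z⁻¹ ≠ 0 := slitFactor_ne_zero ht₀ ht (by simp [hz])
    have h_sq := smallRoot_mul_slitDefectAxisGF_inv_sq ht₀ ht hz
    simp only [Pi.smul_apply, smul_eq_mul]
    linear_combination -(slitFactor t z⁻¹)⁻¹ * h_sq -
      t ^ 2 * slitFactor t z * slitAxisGF sqStepFinset t z ^ 2 * mul_inv_cancel₀ h_ne

lemma smallRoot_mul_slitDefect_zero_sq (ht₀ : 0 < t) (ht : t < 1 / 4) :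
    smallRoot (t⁻¹ - 2) * smallRoot (t⁻¹ + 2) * slitDefect sqStepFinset t 0 ^ 2 = t ^ 2 := by
  have h := slitFactor_mul_slitAxisGF_sq_eq ht₀ ht (w := 0) (by simp)
  rw [slitFactor_zero, slitAxisGF_zero ht₀.le (card_sqStepFinset_mul_lt_one ht),
    slitDefectAxisGF_zero, one_pow, mul_one, mul_one] at h
  exact_mod_cast h.symm

lemma slitGF_one_zero (ht₀ : 0 < t) (ht : t < 1 / 4) :
    slitGF sqStepFinset t (1, 0) = (smallRoot (t⁻¹ - 2) + smallRoot (t⁻¹ + 2)) / 2 := by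
  have ht' := card_sqStepFinset_mul_lt_one ht
  have h_const : (fun w ↦ t ^ 2 * slitFactor t w * slitAxisGF sqStepFinset t w ^ 2) =ᶠ[𝓝 0]
      fun _ ↦ smallRoot (t⁻¹ - 2) * smallRoot (t⁻¹ + 2) *
        slitDefectAxisGF sqStepFinset t 0 ^ 2 := by
    filter_upwards [ball_mem_nhds (0 : ℂ) one_pos] with w hw
    exact slitFactor_mul_slitAxisGF_sq_eq ht₀ ht (mem_ball_zero_iff.1 hw)
  have h_deriv := ((hasDerivAt_slitFactor_zero t).const_mul ((t : ℂ) ^ 2)).mul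
    ((hasDerivAt_slitAxisGF_zero ht₀.le ht').pow 2)
  have h := h_deriv.unique ((hasDerivAt_const (0 : ℂ) _).congr_of_eventuallyEq h_const)
  simp only [Pi.pow_apply, slitFactor_zero, slitAxisGF_zero ht₀.le ht'] at h
  have ht_sq : (t : ℂ) ^ 2 ≠ 0 := pow_ne_zero 2 (Complex.ofReal_ne_zero.2 ht₀.ne')
  have h_value : (slitGF sqStepFinset t (1, 0) : ℂ) =
      (smallRoot (t⁻¹ - 2) + smallRoot (t⁻¹ + 2)) / 2 :=
    mul_left_cancel₀ ht_sq (by linear_combination h / 2)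
  exact_mod_cast h_value

lemma slitGF_zero_neg_one (t : ℝ) :
    slitGF sqStepFinset t (0, -1) = slitGF sqStepFinset t (0, 1) := by
  let σ : ℤ × ℤ ≃+ ℤ × ℤ := (AddEquiv.refl ℤ).prodCongr (AddEquiv.neg ℤ)
  have h_apply (p : ℤ × ℤ) : σ p = (p.1, -p.2) := rfl
  have h_steps (e : ℤ × ℤ) : σ e ∈ sqStepFinset ↔ e ∈ sqStepFinset := by
    simp only [sqStepFinset, h_apply, Finset.mem_insert, Finset.mem_singleton, Prod.ext_iff]
    omega
  exact slitGF_addEquiv σ h_steps (fun p ↦ by simp [slitH, h_apply]) (0, 1)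

lemma slitDefect_sqStepFinset_zero (ht₀ : 0 ≤ t) (ht : t < 1 / 4) :
    slitDefect sqStepFinset t 0 =
      1 - t * (slitGF sqStepFinset t (1, 0) + 2 * slitGF sqStepFinset t (0, 1)) := by
  have ht' := card_sqStepFinset_mul_lt_one ht
  have h_origin : slitGF sqStepFinset t 0 = 1 := by
    rw [slitGF_of_mem ht₀ ht' (by simp [slitH]), if_pos rfl]
  have h_left : slitGF sqStepFinset t (-1, 0) = 0 := by
    rw [slitGF_of_mem ht₀ ht' (by simp [slitH]), if_neg (by simp [Prod.zero_eq_mk])]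
  have h_sum : ∑ e ∈ sqStepFinset, slitGF sqStepFinset t (0 - e) =
      slitGF sqStepFinset t (1, 0) + 2 * slitGF sqStepFinset t (0, 1) := by
    simp only [sum_sqStepFinset, zero_sub, Prod.neg_mk, neg_zero, neg_neg, h_left,
      slitGF_zero_neg_one]
    ring
  rw [slitDefect, stepDefect, h_origin, h_sum]

lemma slitDefect_zero_eq (ht₀ : 0 < t) (ht : t < 1 / 4) :
    slitDefect sqStepFinset t 0 = t * (√(smallRoot (t⁻¹ - 2) * smallRoot (t⁻¹ + 2)))⁻¹ := by
  have h_pos : 0 < smallRoot (t⁻¹ - 2) * smallRoot (t⁻¹ + 2) :=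
    mul_pos (smallRoot_pos (two_lt_inv_sub_two ht₀ ht).le)
      (smallRoot_pos (two_lt_inv_add_two ht₀).le)
  have h_nonneg := slitDefect_zero_nonneg ht₀.le (card_sqStepFinset_mul_lt_one ht)
  rw [eq_mul_inv_iff_mul_eq₀ (Real.sqrt_pos.2 h_pos).ne', mul_comm]
  calc √(smallRoot (t⁻¹ - 2) * smallRoot (t⁻¹ + 2)) * slitDefect sqStepFinset t 0
    _ = √(t ^ 2) := by
      rw [← smallRoot_mul_slitDefect_zero_sq ht₀ ht, Real.sqrt_mul h_pos.le, Real.sqrt_sq h_nonneg]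
    _ = t := Real.sqrt_sq ht₀.le

lemma slitGF_zero_one (ht₀ : 0 < t) (ht : t < 1 / 4) :
    slitGF sqStepFinset t (0, 1) =
      (t⁻¹ - (smallRoot (t⁻¹ - 2) + smallRoot (t⁻¹ + 2)) / 2 -
        (√(smallRoot (t⁻¹ - 2) * smallRoot (t⁻¹ + 2)))⁻¹) / 2 := by
  have h := (slitDefect_sqStepFinset_zero ht₀.le ht).symm.trans (slitDefect_zero_eq ht₀ ht)
  rw [← slitGF_one_zero ht₀ ht]
  refine mul_left_cancel₀ ht₀.ne' ?_
  linear_combination -h / 2 - mul_inv_cancel₀ ht₀.ne' / 2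

lemma eventually_nhdsLT_quarter {P : ℝ → Prop} (h : ∀ t, 0 < t → t < 1 / 4 → P t) :
    ∀ᶠ t in 𝓝[<] (1 / 4), P t := by
  filter_upwards [Ioo_mem_nhdsLT (show (0 : ℝ) < 1 / 4 by norm_num)] with t ht
  exact h t ht.1 ht.2

lemma tendsto_smallRoot_inv_sub_two :
    Tendsto (fun t : ℝ ↦ smallRoot (t⁻¹ - 2)) (𝓝[<] (1 / 4)) (𝓝 1) := by
  have h : ContinuousAt (fun t : ℝ ↦ smallRoot (t⁻¹ - 2)) (1 / 4) := by
    fun_prop (disch := norm_num)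
  convert h.tendsto.mono_left nhdsWithin_le_nhds
  norm_num [smallRoot_two]

lemma tendsto_smallRoot_inv_add_two :
    Tendsto (fun t : ℝ ↦ smallRoot (t⁻¹ + 2)) (𝓝[<] (1 / 4)) (𝓝 ((√2 - 1) ^ 2)) := by
  have h : ContinuousAt (fun t : ℝ ↦ smallRoot (t⁻¹ + 2)) (1 / 4) := by
    fun_prop (disch := norm_num)
  convert h.tendsto.mono_left nhdsWithin_le_nhds
  norm_num [smallRoot_six]

lemma tendsto_slitGF_one_zero :
    Tendsto (fun t ↦ slitGF sqStepFinset t (1, 0)) (𝓝[<] (1 / 4)) (𝓝 (2 - √2)) := by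
  have h := (tendsto_smallRoot_inv_sub_two.add tendsto_smallRoot_inv_add_two).div_const 2
  have h_value : (1 + (√2 - 1) ^ 2) / 2 = 2 - √2 := by
    linear_combination Real.sq_sqrt zero_le_two / 2
  rw [h_value] at h
  exact h.congr' (eventually_nhdsLT_quarter fun t ht₀ ht ↦ (slitGF_one_zero ht₀ ht).symm)

lemma tendsto_slitGF_zero_one :
    Tendsto (fun t ↦ slitGF sqStepFinset t (0, 1)) (𝓝[<] (1 / 4)) (𝓝 (1 / 2)) := by
  have h_inv : Tendsto (fun t : ℝ ↦ t⁻¹) (𝓝[<] (1 / 4)) (𝓝 (1 / 4)⁻¹) :=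
    (continuousAt_inv₀ (by norm_num)).tendsto.mono_left nhdsWithin_le_nhds
  have h_sqrt : √(1 * (√2 - 1) ^ 2) = √2 - 1 := by
    rw [one_mul, Real.sqrt_sq (sub_nonneg.2 (Real.one_le_sqrt.2 one_le_two))]
  have h_conj : (√2 - 1) * (√2 + 1) = 1 := by linear_combination Real.sq_sqrt zero_le_two
  have h := ((h_inv.sub
    ((tendsto_smallRoot_inv_sub_two.add tendsto_smallRoot_inv_add_two).div_const 2)).sub
    ((tendsto_smallRoot_inv_sub_two.mul tendsto_smallRoot_inv_add_two).sqrt.inv₀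
      (h_sqrt.trans_ne (left_ne_zero_of_mul_eq_one h_conj)))).div_const 2
  have h_value : ((1 / 4)⁻¹ - (1 + (√2 - 1) ^ 2) / 2 - (√(1 * (√2 - 1) ^ 2))⁻¹) / 2 = 1 / 2 := by
    rw [h_sqrt, inv_eq_of_mul_eq_one_right h_conj]
    linear_combination -Real.sq_sqrt zero_le_two / 4
  rw [h_value] at h
  exact h.congr' (eventually_nhdsLT_quarter fun t ht₀ ht ↦ (slitGF_zero_one ht₀ ht).symm)

lemma hasSum_slitCount_div_four_pow {p : ℤ × ℤ} {v : ℝ}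
    (hv : Tendsto (fun t ↦ slitGF sqStepFinset t p) (𝓝[<] (1 / 4)) (𝓝 v)) :
    HasSum (fun n ↦ (slitCount sqSteps p.1 p.2 n : ℝ) / 4 ^ n) v := by
  have h := hasSum_mul_pow_of_tendsto (fun n ↦ Nat.cast_nonneg _) (by norm_num)
    (fun t ht₀ ht ↦ summable_slitCount_mul_pow_length ht₀ (card_sqStepFinset_mul_lt_one ht) p) hv
  simpa only [coe_sqStepFinset, one_div, inv_pow, ← div_eq_mul_inv] using h

end SquareLattice

/-- `∑_{n≥0} a_{0,1}(n)/4ⁿ = 1/2` and `∑_{n≥0} a_{1,0}(n)/4ⁿ = 2 − √2`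
(both series converge); i.e. a simple random walk started at `(0,1)` (resp. `(1,0)`),
stopped when it first hits `H`, stops at the origin with probability `1/2`
(resp. `2 − √2`). -/
theorem slit_plane_hitting_probabilities :
    (Summable fun n : ℕ => (slitCount sqSteps 0 1 n : ℝ) / 4 ^ n)
    ∧ (∑' n : ℕ, (slitCount sqSteps 0 1 n : ℝ) / 4 ^ n) = 1 / 2
    ∧ (Summable fun n : ℕ => (slitCount sqSteps 1 0 n : ℝ) / 4 ^ n)
    ∧ (∑' n : ℕ, (slitCount sqSteps 1 0 n : ℝ) / 4 ^ n) = 2 - Real.sqrt 2 := by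
  have h_zero_one := hasSum_slitCount_div_four_pow tendsto_slitGF_zero_one
  have h_one_zero := hasSum_slitCount_div_four_pow tendsto_slitGF_one_zero
  exact ⟨h_zero_one.summable, h_zero_one.tsum_eq, h_one_zero.summable, h_one_zero.tsum_eq⟩
end
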